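/- There exists a constant C > 0 such that for every f ∈ H¹ the Poisson maximal function M̃f belongs to L¹(ρ) and ‖M̃f‖₁ ≤ C‖f‖_{H¹}. -/

import Mathlib

open MeasureTheory Real Filter Set
open scoped ENNReal

noncomputable section

/-- The group `G = ℝ² ⋊ ℝ⁺`, realized as triples `(x₁, x₂, a)` (only `a > 0` is relevant). -/
abbrev G : Type := ℝ × ℝ × ℝ

/-- Group product `(x₁,x₂,a)·(x₁',x₂',a') = (x₁+a x₁', x₂+a x₂', a a')`. -/
def gMul (x y : G) : G := (x.1 + x.2.2 * y.1, x.2.1 + x.2.2 * y.2.1, x.2.2 * y.2.2)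

/-- Group inverse `(x₁,x₂,a)⁻¹ = (−x₁/a, −x₂/a, 1/a)`. -/
def gInv (x : G) : G := (-x.1 / x.2.2, -x.2.1 / x.2.2, 1 / x.2.2)

/-- The identity `e = (0,0,1)`. -/
def gE : G := (0, 0, 1)

/-- The right Haar measure `dρ = a⁻¹ dx₁ dx₂ da` (supported where `a > 0`). -/
def ρG : Measure G :=
  (volume : Measure G).withDensity fun x => ENNReal.ofReal (if 0 < x.2.2 then x.2.2⁻¹ else 0)

/-- The modular function `δ(x₁,x₂,a) = a⁻²`. -/
def deltaG (x : G) : ℝ := (x.2.2 ^ 2)⁻¹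

/-- `|x| = √(x₁² + x₂²)`. -/
def normG (x : G) : ℝ := Real.sqrt (x.1 ^ 2 + x.2.1 ^ 2)

/-- `cosh r(x) = (a + a⁻¹ + a⁻¹|x|²)/2`. -/
def coshArg (x : G) : ℝ := (x.2.2 + x.2.2⁻¹ + x.2.2⁻¹ * (x.1 ^ 2 + x.2.1 ^ 2)) / 2

/-- `r(x) ≥ 0` is determined by `cosh r(x) = coshArg x`; explicitly `r = arcosh (coshArg x)`. -/
def rG (x : G) : ℝ := Real.log (coshArg x + Real.sqrt (coshArg x ^ 2 - 1))

/-- The left-invariant distance `d(x,y) = r(x⁻¹y)`. -/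
def dG (x y : G) : ℝ := rG (gMul (gInv x) y)

/-- The heat kernel
`p_t(x) = (8π^{3/2})⁻¹ δ(x)^{1/2} (r(x)/sinh r(x)) t^{−3/2} exp(−r(x)²/(4t))`,
with `r/sinh r := 1` at `x = e`. -/
def heatK (t : ℝ) (x : G) : ℝ :=
  (8 * Real.pi ^ ((3 : ℝ)/2))⁻¹ * Real.sqrt (deltaG x) *
    (if rG x = 0 then 1 else rG x / Real.sinh (rG x)) *
    t ^ (-(3 : ℝ)/2) * Real.exp (-(rG x ^ 2) / (4 * t))

/-- Convolution `f ∗ p_t(x) = ∫ f(xy⁻¹) p_t(y) dρ(y)`. -/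
def convHeat (f : G → ℝ) (t : ℝ) (x : G) : ℝ := ∫ y, f (gMul x (gInv y)) * heatK t y ∂ρG

/-- The heat maximal operator `Mf(x) = sup_{t>0} |f ∗ p_t(x)|` (valued in `ℝ≥0∞`). -/
def maxHeat (f : G → ℝ) (x : G) : ℝ≥0∞ :=
  ⨆ (t : ℝ) (_ : 0 < t), ENNReal.ofReal |convHeat f t x|

/-- Calderón–Zygmund sets. -/
def IsCZ (R : Set G) : Prop :=
  ∃ c : G, ∃ L r : ℝ, 0 < c.2.2 ∧ 0 < L ∧ 0 < r ∧
    R = Set.Icc (c.1 - L/2) (c.1 + L/2) ×ˢ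
        (Set.Icc (c.2.1 - L/2) (c.2.1 + L/2) ×ˢ
         Set.Icc (c.2.2 * Real.exp (-r)) (c.2.2 * Real.exp r)) ∧
    (r < 1 → Real.exp 2 * c.2.2 * r ≤ L ∧ L < Real.exp 8 * c.2.2 * r) ∧
    (1 ≤ r → c.2.2 * Real.exp (2*r) ≤ L ∧ L < c.2.2 * Real.exp (8*r))

/-- Atoms: `A ∈ L¹(ρ)` supported in a Calderón–Zygmund set `R`, with
`‖A‖_∞ ≤ ρ(R)⁻¹` and `∫ A dρ = 0`. -/
def IsAtomG (A : G → ℝ) : Prop :=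
  Integrable A ρG ∧
  ∃ R : Set G, IsCZ R ∧ (∀ x ∉ R, A x = 0) ∧
    eLpNorm A ⊤ ρG ≤ (ρG R)⁻¹ ∧
    ∫ x, A x ∂ρG = 0

/-- `f = Σ_j lam_j A_j` with atoms `A_j`, `Σ_j |lam_j| < ∞`, converging in `L¹(ρ)`. -/
def IsH1Decomp (f : G → ℝ) (lam : ℕ → ℝ) (A : ℕ → G → ℝ) : Prop :=
  (∀ j, IsAtomG (A j)) ∧ Summable (fun j => |lam j|) ∧
  Tendsto (fun N => eLpNorm (fun x => f x - ∑ j ∈ Finset.range N, lam j * A j x) 1 ρG)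
    atTop (nhds 0)

/-- The Hardy space `H¹`. -/
def MemH1 (f : G → ℝ) : Prop :=
  Integrable f ρG ∧ ∃ lam A, IsH1Decomp f lam A

/-- `‖f‖_{H¹} = inf Σ_j |lam_j|` over all atomic decompositions. -/
def H1norm (f : G → ℝ) : ℝ :=
  sInf {s | ∃ lam A, IsH1Decomp f lam A ∧ s = ∑' j, |lam j|}

/-- The left-invariant vector field `X₀ = a ∂_a`. -/
def X0 (f : G → ℝ) (x : G) : ℝ := x.2.2 * deriv (fun s => f (x.1, x.2.1, s)) x.2.2

/-- The left-invariant vector field `X₁ = a ∂_{x₁}`. -/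
def X1 (f : G → ℝ) (x : G) : ℝ := x.2.2 * deriv (fun s => f (s, x.2.1, x.2.2)) x.1

/-- The left-invariant vector field `X₂ = a ∂_{x₂}`. -/
def X2 (f : G → ℝ) (x : G) : ℝ := x.2.2 * deriv (fun s => f (x.1, s, x.2.2)) x.2.1

/-- `‖∇p_t(x)‖`, the Euclidean norm of `(X₀p_t, X₁p_t, X₂p_t)` at `x`. -/
def gradHeatNorm (t : ℝ) (x : G) : ℝ :=
  Real.sqrt (X0 (heatK t) x ^ 2 + X1 (heatK t) x ^ 2 + X2 (heatK t) x ^ 2)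

/-- The Poisson kernel `q_t(x) = π⁻² δ(x)^{1/2} (r(x)/sinh r(x)) · t/(t²+r(x)²)²`. -/
def poissonK (t : ℝ) (x : G) : ℝ :=
  (Real.pi ^ 2)⁻¹ * Real.sqrt (deltaG x) *
    (if rG x = 0 then 1 else rG x / Real.sinh (rG x)) *
    (t / (t ^ 2 + rG x ^ 2) ^ 2)

/-- Convolution `f ∗ q_t(x) = ∫ f(xy⁻¹) q_t(y) dρ(y)`. -/
def convPoisson (f : G → ℝ) (t : ℝ) (x : G) : ℝ := ∫ y, f (gMul x (gInv y)) * poissonK t y ∂ρG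

/-- The Poisson maximal operator `M̃f(x) = sup_{t>0} |f ∗ q_t(x)|`. -/
def maxPoisson (f : G → ℝ) (x : G) : ℝ≥0∞ :=
  ⨆ (t : ℝ) (_ : 0 < t), ENNReal.ofReal |convPoisson f t x|

/-- `G_{r₁}(x) = sup_{z ∈ B(x,r₁/2)} sup_{t>0} ‖∇p_t(z)‖`. -/
def Gsup (r1 : ℝ) (x : G) : ℝ≥0∞ :=
  ⨆ (z : G) (_ : 0 < z.2.2 ∧ dG x z < r1 / 2) (t : ℝ) (_ : 0 < t),
    ENNReal.ofReal (gradHeatNorm t z)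

/-- `R₀ = [−1,1]×[−1,1]×[e⁻¹,e]`. -/
def R0set : Set G :=
  Set.Icc (-1 : ℝ) 1 ×ˢ (Set.Icc (-1 : ℝ) 1 ×ˢ Set.Icc (Real.exp (-1)) (Real.exp 1))

/-- `R_L = [L−1,L+1]×[−1,1]×[e⁻¹,e]`. -/
def RLset (L : ℝ) : Set G :=
  Set.Icc (L - 1) (L + 1) ×ˢ (Set.Icc (-1 : ℝ) 1 ×ˢ Set.Icc (Real.exp (-1)) (Real.exp 1))

/-- `f_L = χ_{R_L} − χ_{R₀}`. -/
def fL (L : ℝ) : G → ℝ := fun x =>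
  (RLset L).indicator (fun _ => (1 : ℝ)) x - R0set.indicator (fun _ => (1 : ℝ)) x

/-- The mean of `g` over `R` with respect to `ρ`. -/
def czMean (g : G → ℝ) (R : Set G) : ℝ := (∫ x in R, g x ∂ρG) / (ρG R).toReal

/-- `‖g‖_{BMO} = sup_R ρ(R)⁻¹ ∫_R |g − g_R| dρ` over Calderón–Zygmund sets `R`. -/
def czBMO (g : G → ℝ) : ℝ≥0∞ :=
  ⨆ (R : Set G) (_ : IsCZ R),
    (ρG R)⁻¹ * ∫⁻ x in R, ENNReal.ofReal |g x - czMean g R| ∂ρG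

/-- `‖h‖_{BMO(ℝ)} = sup_Q |Q|⁻¹ ∫_Q |h − h_Q|` over bounded intervals `Q ⊂ ℝ`. -/
def lineBMO (h : ℝ → ℝ) : ℝ≥0∞ :=
  ⨆ (a : ℝ) (b : ℝ) (_ : a < b),
    (ENNReal.ofReal (b - a))⁻¹ *
      ∫⁻ s in Set.Icc a b, ENNReal.ofReal |h s - (∫ u in Set.Icc a b, h u) / (b - a)|

/-- `2R₀ = [−2,2]×[−2,2]×[e⁻²,e²]`. -/
def twoR0set : Set G :=
  Set.Icc (-2 : ℝ) 2 ×ˢ (Set.Icc (-2 : ℝ) 2 ×ˢ Set.Icc (Real.exp (-2)) (Real.exp 2))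

/-- The set `{x₁ > 3, |x₂| < 1, e⁻¹ < a < e}`. -/
def domSpecial : Set G :=
  {x : G | 3 < x.1 ∧ |x.2.1| < 1 ∧ Real.exp (-1) < x.2.2 ∧ x.2.2 < Real.exp 1}

/-- The function equal to `1/(x₁ (log x₁)^{3/2})` on `{x₁ > 3, |x₂| < 1, e⁻¹ < a < e}`,
to `c₀` on `R₀`, and `0` elsewhere. -/
def fSpecial (c0 : ℝ) : G → ℝ := fun x =>
  domSpecial.indicator (fun y => (y.1 * Real.log y.1 ^ ((3 : ℝ)/2))⁻¹) x
    + R0set.indicator (fun _ => c0) x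

/-!
Right convolution commutes with left translations, so it suffices to majorize `|A ∗ q_t|`, for all
`t` at once and with a uniform integral, for an atom `A` supported in a box centered at the
identity, of half-height `s` in `log a`. Writing `d = d(z, x)` and letting `n` and `p` be the
Euclidean distances from `x` to `z` and to the mirror image of `z`, one has `sinh d = p n / (2 a b)`
with `a`, `b` the heights of `x`, `z`, and the convolution kernel is
`(π² p n)⁻¹ · 2 d t / (t² + d²)²`. It is thus `O(1 / (p n d²))`, and its oscillation as `z` moves
over the box is smaller by a factor `Δ / n + V / d`, where `Δ` and `V` bound the displacements of
`z` and of `d`; both bounds are uniform in `t`.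

For a small box, use `‖q_t‖₁ = 1` near the box and cancellation away from it: the resulting tail
`r⁻³ δ^{1/2} / sinh r` has integral `O(1 / s)` outside a ball of radius comparable to `s`, and comes
with a factor `s`. For a large box, cancellation fails over the horizontal base of the box. There,
averaging the kernel bound over the base costs only a logarithm, at most a multiple of `s`, which
the decay `(s² + log² a)⁻¹` in the vertical direction compensates. Away from the base cancellation
works again, up to a boundary term `M (|x|² + M²)^{-3/2} (1 + log² a)⁻¹` with `M` the width of the
box.

Since the majorants do not depend on `t` and, for fixed `x` and `t`, the kernel is bounded, the
estimate for atoms can be summed along an atomic decomposition.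
-/

/-! ### Integration against the right Haar measure -/

lemma measurable_density_ρG :
    Measurable fun x : G ↦ ENNReal.ofReal (if 0 < x.2.2 then x.2.2⁻¹ else 0) :=
  (Measurable.ite (measurableSet_lt measurable_const (by fun_prop)) (by fun_prop)
    measurable_const).ennreal_ofReal

lemma ae_pos_ρG : ∀ᵐ x ∂ρG, 0 < x.2.2 := by
  rw [ρG, ae_withDensity_iff measurable_density_ρG]
  filter_upwards with x hx
  by_contra h
  simp [h] at hx

lemma lintegral_comp_add_mul (f : ℝ → ℝ≥0∞) (x : ℝ) {c : ℝ} (hc : c ≠ 0) :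
    ∫⁻ y, f (x + c * y) = ENNReal.ofReal |c⁻¹| * ∫⁻ y, f y := by
  have h := (Homeomorph.mulLeft₀ c hc).measurableEmbedding.lintegral_map
    (μ := volume) (fun y ↦ f (x + y))
  simp only [Homeomorph.coe_mulLeft₀] at h
  rw [← h, Real.map_volume_mul_left hc, lintegral_smul_measure, smul_eq_mul,
    lintegral_add_left_eq_self f x]

lemma lintegral_lintegral_comp_add_mul (f : ℝ → ℝ → ℝ≥0∞) (x₁ x₂ : ℝ) {c : ℝ} (hc : c ≠ 0) :
    ∫⁻ y₁, ∫⁻ y₂, f (x₁ + c * y₁) (x₂ + c * y₂) =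
      ENNReal.ofReal (c ^ 2)⁻¹ * ∫⁻ y₁, ∫⁻ y₂, f y₁ y₂ := by
  simp_rw [fun y₁ ↦ lintegral_comp_add_mul (f (x₁ + c * y₁)) x₂ hc]
  rw [lintegral_const_mul' _ _ ENNReal.ofReal_ne_top,
    lintegral_comp_add_mul (fun y₁ ↦ ∫⁻ y₂, f y₁ y₂) x₁ hc, ← mul_assoc,
    ← ENNReal.ofReal_mul (abs_nonneg _), ← sq, sq_abs, inv_pow]

lemma setLIntegral_Ioi_inv_mul_eq_lintegral_exp (f : ℝ → ℝ≥0∞) :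
    ∫⁻ a in Ioi (0 : ℝ), ENNReal.ofReal a⁻¹ * f a = ∫⁻ u : ℝ, f (exp u) := by
  rw [← Real.range_exp, ← image_univ, lintegral_image_eq_lintegral_abs_deriv_mul MeasurableSet.univ
    (fun x _ ↦ (Real.hasDerivAt_exp x).hasDerivWithinAt) Real.exp_injective.injOn,
    setLIntegral_univ]
  refine lintegral_congr fun u ↦ ?_
  rw [← mul_assoc, ← ENNReal.ofReal_mul (abs_nonneg _), abs_of_pos (exp_pos u),
    mul_inv_cancel₀ (exp_pos u).ne', ENNReal.ofReal_one, one_mul]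

lemma lintegral_volume_eq_iterated {F : G → ℝ≥0∞} (hF : Measurable F) :
    ∫⁻ x, F x = ∫⁻ a : ℝ, ∫⁻ x₁ : ℝ, ∫⁻ x₂ : ℝ, F (x₁, x₂, a) := by
  have hF' : Measurable fun p : (ℝ × ℝ) × ℝ ↦ F (p.1.1, p.2, p.1.2) := by fun_prop
  calc ∫⁻ x, F x = ∫⁻ x₁ : ℝ, ∫⁻ a : ℝ, ∫⁻ x₂ : ℝ, F (x₁, x₂, a) := by
        rw [Measure.volume_eq_prod, lintegral_prod _ hF.aemeasurable]
        refine lintegral_congr fun x₁ ↦ ?_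
        rw [Measure.volume_eq_prod, lintegral_prod_symm _ (by fun_prop)]
    _ = ∫⁻ a : ℝ, ∫⁻ x₁ : ℝ, ∫⁻ x₂ : ℝ, F (x₁, x₂, a) :=
        lintegral_lintegral_swap (hF'.lintegral_prod_right' (ν := volume)).aemeasurable

lemma lintegral_ρG {F : G → ℝ≥0∞} (hF : Measurable F) :
    ∫⁻ x, F x ∂ρG = ∫⁻ u : ℝ, ∫⁻ x₁ : ℝ, ∫⁻ x₂ : ℝ, F (x₁, x₂, exp u) := by
  rw [ρG, lintegral_withDensity_eq_lintegral_mul _ measurable_density_ρG hF,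
    lintegral_volume_eq_iterated (measurable_density_ρG.mul hF),
    ← setLIntegral_Ioi_inv_mul_eq_lintegral_exp (fun a ↦ ∫⁻ x₁ : ℝ, ∫⁻ x₂ : ℝ, F (x₁, x₂, a)),
    ← lintegral_indicator measurableSet_Ioi]
  refine lintegral_congr fun a ↦ ?_
  simp only [Pi.mul_apply]
  simp_rw [lintegral_const_mul' _ _ ENNReal.ofReal_ne_top]
  by_cases ha : 0 < a <;> simp [ha]

lemma gMul_gInv_cancel_left {c : G} (hc : 0 < c.2.2) (x : G) : gMul c (gMul (gInv c) x) = x := by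
  simp only [gMul, gInv]
  ext <;> simp only <;> field_simp <;> ring

lemma gInv_gInv {x : G} (hx : 0 < x.2.2) : gInv (gInv x) = x := by
  simp only [gInv]
  ext <;> simp only <;> field_simp

lemma gMul_assoc (x y z : G) : gMul (gMul x y) z = gMul x (gMul y z) := by
  simp only [gMul]
  ext <;> simp only <;> ring

lemma gInv_gMul_self {x : G} (hx : 0 < x.2.2) : gMul (gInv x) x = gE := by
  simp only [gMul, gInv, gE]
  ext <;> simp only <;> field_simp <;> ring

lemma gMul_gE (x : G) : gMul x gE = x := by
  simp [gMul, gE]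

lemma gMul_pos {x y : G} (hx : 0 < x.2.2) (hy : 0 < y.2.2) : 0 < (gMul x y).2.2 :=
  mul_pos hx hy

lemma gInv_pos {x : G} (hx : 0 < x.2.2) : 0 < (gInv x).2.2 :=
  one_div_pos.2 hx

lemma gInv_gMul_rev {x y : G} (hx : 0 < x.2.2) (hy : 0 < y.2.2) :
    gInv (gMul x y) = gMul (gInv y) (gInv x) := by
  simp only [gMul, gInv]
  ext <;> simp only <;> field_simp <;> ring

lemma deltaG_gMul (x y : G) : deltaG (gMul x y) = deltaG x * deltaG y := by
  simp only [deltaG, gMul, mul_pow, mul_inv]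

lemma deltaG_nonneg (x : G) : 0 ≤ deltaG x := by
  unfold deltaG
  positivity

lemma deltaG_pos {x : G} (hx : 0 < x.2.2) : 0 < deltaG x := by
  unfold deltaG
  positivity

lemma sqrt_deltaG {x : G} (hx : 0 < x.2.2) : √(deltaG x) = x.2.2⁻¹ := by
  rw [deltaG, ← inv_pow, Real.sqrt_sq (inv_pos.2 hx).le]

@[fun_prop]
lemma measurable_deltaG : Measurable deltaG := by
  unfold deltaG
  fun_prop

@[fun_prop]
lemma measurable_gMul : Measurable fun p : G × G ↦ gMul p.1 p.2 := by
  unfold gMul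
  fun_prop

@[fun_prop]
lemma measurable_gInv : Measurable gInv := by
  unfold gInv
  fun_prop

lemma measurable_gMul_left (c : G) : Measurable (gMul c) :=
  measurable_gMul.comp measurable_prodMk_left

lemma lintegral_gMul_left {c : G} (hc : 0 < c.2.2) {F : G → ℝ≥0∞} (hF : Measurable F) :
    ∫⁻ y, F (gMul c y) ∂ρG = ENNReal.ofReal (deltaG c) * ∫⁻ z, F z ∂ρG := by
  rw [lintegral_ρG (F := fun y ↦ F (gMul c y)) (hF.comp (measurable_gMul_left c)),
    lintegral_ρG hF,
    ← lintegral_const_mul' _ _ ENNReal.ofReal_ne_top,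
    ← lintegral_add_left_eq_self (fun u ↦ ENNReal.ofReal (deltaG c) * _) (log c.2.2)]
  refine lintegral_congr fun u ↦ ?_
  simpa only [gMul, deltaG, exp_add, exp_log hc] using
    lintegral_lintegral_comp_add_mul (fun x₁ x₂ ↦ F (x₁, x₂, c.2.2 * exp u)) c.1 c.2.1 hc.ne'

lemma lintegral_gInv {F : G → ℝ≥0∞} (hF : Measurable F) :
    ∫⁻ y, F (gInv y) ∂ρG = ∫⁻ z, ENNReal.ofReal (deltaG z) * F z ∂ρG := by
  rw [lintegral_ρG (by fun_prop), lintegral_ρG (by fun_prop), ← lintegral_neg_eq_self]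
  refine lintegral_congr fun u ↦ ?_
  have hinv (y₁ y₂ : ℝ) :
      gInv (y₁, y₂, exp (-u)) = (0 + -exp u * y₁, 0 + -exp u * y₂, exp u) := by
    simp only [gInv, Real.exp_neg]
    ext <;> simp <;> ring
  simp_rw [hinv, lintegral_lintegral_comp_add_mul (fun x₁ x₂ ↦ F (x₁, x₂, exp u)) 0 0
    (neg_ne_zero.2 (exp_pos u).ne'), deltaG, neg_sq,
    lintegral_const_mul' _ _ ENNReal.ofReal_ne_top]

lemma lintegral_gMul_gInv {x : G} (hx : 0 < x.2.2) {F : G → ℝ≥0∞} (hF : Measurable F) :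
    ∫⁻ y, F (gMul x (gInv y)) ∂ρG = ∫⁻ z, ENNReal.ofReal (deltaG z) * F z ∂ρG := by
  have hδ (z : G) : ENNReal.ofReal (deltaG z) = ENNReal.ofReal (deltaG x)⁻¹ *
      ENNReal.ofReal (deltaG (gMul x z)) := by
    rw [← ENNReal.ofReal_mul (inv_nonneg.2 (deltaG_nonneg x)), deltaG_gMul,
      inv_mul_cancel_left₀ (deltaG_pos hx).ne']
  rw [lintegral_gInv (F := fun z ↦ F (gMul x z)) (hF.comp (measurable_gMul_left x))]
  have hF' (z : G) : ENNReal.ofReal (deltaG z) * F (gMul x z) = ENNReal.ofReal (deltaG x)⁻¹ *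
      (ENNReal.ofReal (deltaG (gMul x z)) * F (gMul x z)) := by rw [hδ, mul_assoc]
  simp_rw [hF']
  rw [lintegral_const_mul' _ _ ENNReal.ofReal_ne_top,
    lintegral_gMul_left hx (F := fun z ↦ ENNReal.ofReal (deltaG z) * F z) (by fun_prop),
    ← mul_assoc, ← ENNReal.ofReal_mul (inv_nonneg.2 (deltaG_nonneg x)),
    inv_mul_cancel₀ (deltaG_pos hx).ne',
    ENNReal.ofReal_one, one_mul]

lemma map_gMul_left {c : G} (hc : 0 < c.2.2) :
    Measure.map (gMul c) ρG = ENNReal.ofReal (deltaG c) • ρG := by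
  refine Measure.ext_of_lintegral _ fun F hF ↦ ?_
  rw [lintegral_map hF (measurable_gMul_left c), lintegral_gMul_left hc hF,
    lintegral_smul_measure, smul_eq_mul]

lemma map_gMul_gInv {x : G} (hx : 0 < x.2.2) :
    Measure.map (fun y ↦ gMul x (gInv y)) ρG =
      ρG.withDensity fun z ↦ ENNReal.ofReal (deltaG z) := by
  refine Measure.ext_of_lintegral _ fun F hF ↦ ?_
  rw [lintegral_map hF (by fun_prop), lintegral_gMul_gInv hx hF,
    lintegral_withDensity_eq_lintegral_mul _ (by fun_prop) hF]
  rfl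

lemma integral_gMul_left {c : G} (hc : 0 < c.2.2) {F : G → ℝ} (hF : AEStronglyMeasurable F ρG) :
    ∫ y, F (gMul c y) ∂ρG = deltaG c * ∫ z, F z ∂ρG := by
  rw [← integral_map (measurable_gMul_left c).aemeasurable (by
    rw [map_gMul_left hc]
    exact hF.mono_ac Measure.smul_absolutelyContinuous), map_gMul_left hc, integral_smul_measure,
    ENNReal.toReal_ofReal (deltaG_nonneg c), smul_eq_mul]

lemma integral_gMul_gInv {x : G} (hx : 0 < x.2.2) {F : G → ℝ} (hF : AEStronglyMeasurable F ρG) :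
    ∫ y, F (gMul x (gInv y)) ∂ρG = ∫ z, deltaG z * F z ∂ρG := by
  rw [← integral_map (f := F) (Measurable.aemeasurable (by fun_prop)) (by
    rw [map_gMul_gInv hx]
    exact hF.mono_ac (withDensity_absolutelyContinuous _ _)), map_gMul_gInv hx,
    integral_withDensity_eq_integral_toReal_smul (by fun_prop) (by simp)]
  simp only [ENNReal.toReal_ofReal (deltaG_nonneg _), smul_eq_mul]

/-! ### Hyperbolic distance in the upper half-space -/

/-- The Euclidean distance between two points of `ℝ³`; together with `mirrorDist` it gives closed
formulas for the hyperbolic functions of `dG`. -/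
def eucDist (x y : G) : ℝ := √((x.1 - y.1) ^ 2 + (x.2.1 - y.2.1) ^ 2 + (x.2.2 - y.2.2) ^ 2)

/-- The Euclidean distance from `x` to the mirror image of `y` in the boundary plane `{a = 0}`. -/
def mirrorDist (x y : G) : ℝ := eucDist x (y.1, y.2.1, -y.2.2)

section UpperHalfSpace

variable {x y : G}

lemma eucDist_nonneg (x y : G) : 0 ≤ eucDist x y := Real.sqrt_nonneg _

lemma mirrorDist_nonneg (x y : G) : 0 ≤ mirrorDist x y := eucDist_nonneg _ _

lemma sq_eucDist (x y : G) :
    eucDist x y ^ 2 = (x.1 - y.1) ^ 2 + (x.2.1 - y.2.1) ^ 2 + (x.2.2 - y.2.2) ^ 2 :=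
  Real.sq_sqrt (by positivity)

lemma sq_mirrorDist (x y : G) :
    mirrorDist x y ^ 2 = (x.1 - y.1) ^ 2 + (x.2.1 - y.2.1) ^ 2 + (x.2.2 + y.2.2) ^ 2 := by
  simpa only [mirrorDist, sub_neg_eq_add] using sq_eucDist x (y.1, y.2.1, -y.2.2)

lemma sq_mirrorDist_sub_sq_eucDist (x y : G) :
    mirrorDist x y ^ 2 - eucDist x y ^ 2 = 4 * (x.2.2 * y.2.2) := by
  rw [sq_mirrorDist, sq_eucDist]
  ring

lemma add_le_mirrorDist (x y : G) : x.2.2 + y.2.2 ≤ mirrorDist x y :=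
  Real.le_sqrt_of_sq_le (by nlinarith [sq_nonneg (x.1 - y.1), sq_nonneg (x.2.1 - y.2.1)])

lemma mirrorDist_pos (hx : 0 < x.2.2) (hy : 0 < y.2.2) : 0 < mirrorDist x y :=
  (add_pos hx hy).trans_le (add_le_mirrorDist x y)

lemma eucDist_lt_mirrorDist (hx : 0 < x.2.2) (hy : 0 < y.2.2) : eucDist x y < mirrorDist x y :=
  lt_of_pow_lt_pow_left₀ 2 (mirrorDist_nonneg x y)
    (by nlinarith [sq_mirrorDist_sub_sq_eucDist x y, mul_pos hx hy])

lemma abs_eucDist_sub_eucDist_le (x y z : G) :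
    |eucDist x z - eucDist y z| ≤ |x.1 - y.1| + |x.2.1 - y.2.1| + |x.2.2 - y.2.2| := by
  set v : G → EuclideanSpace ℝ (Fin 3) := fun w ↦ !₂[w.1, w.2.1, w.2.2] with hv
  have hdist (w w' : G) : eucDist w w' = ‖v w - v w'‖ := by
    simp [hv, eucDist, EuclideanSpace.norm_eq, Fin.sum_univ_three]
  calc |eucDist x z - eucDist y z| ≤ eucDist x y := by
        simpa only [hdist, sub_sub_sub_cancel_right] using
          abs_norm_sub_norm_le (v x - v z) (v y - v z)
    _ ≤ |x.1 - y.1| + |x.2.1 - y.2.1| + |x.2.2 - y.2.2| := by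
        refine Real.sqrt_le_iff.2 ⟨by positivity, ?_⟩
        rw [← sq_abs (x.1 - y.1), ← sq_abs (x.2.1 - y.2.1), ← sq_abs (x.2.2 - y.2.2)]
        have h₁ := abs_nonneg (x.1 - y.1)
        have h₂ := abs_nonneg (x.2.1 - y.2.1)
        have h₃ := abs_nonneg (x.2.2 - y.2.2)
        nlinarith [mul_nonneg h₁ h₂, mul_nonneg h₁ h₃, mul_nonneg h₂ h₃]

lemma abs_mirrorDist_sub_mirrorDist_le (x y z : G) :
    |mirrorDist x z - mirrorDist y z| ≤ |x.1 - y.1| + |x.2.1 - y.2.1| + |x.2.2 - y.2.2| :=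
  abs_eucDist_sub_eucDist_le x y _

lemma rG_eq_arcosh (x : G) : rG x = arcosh (coshArg x) := rfl

lemma coshArg_gInv_gMul (hx : 0 < x.2.2) (hy : 0 < y.2.2) :
    coshArg (gMul (gInv x) y) = 1 + eucDist x y ^ 2 / (2 * (x.2.2 * y.2.2)) := by
  rw [sq_eucDist]
  simp only [coshArg, gMul, gInv]
  field_simp
  ring

lemma cosh_dG (hx : 0 < x.2.2) (hy : 0 < y.2.2) :
    cosh (dG x y) = 1 + eucDist x y ^ 2 / (2 * (x.2.2 * y.2.2)) := by
  rw [dG, rG_eq_arcosh, coshArg_gInv_gMul hx hy,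
    cosh_arcosh (le_add_of_nonneg_right (by positivity))]

lemma dG_nonneg (hx : 0 < x.2.2) (hy : 0 < y.2.2) : 0 ≤ dG x y := by
  rw [dG, rG_eq_arcosh, coshArg_gInv_gMul hx hy]
  exact arcosh_nonneg (le_add_of_nonneg_right (by positivity))

lemma sinh_dG (hx : 0 < x.2.2) (hy : 0 < y.2.2) :
    sinh (dG x y) = mirrorDist x y * eucDist x y / (2 * (x.2.2 * y.2.2)) := by
  have hp := mirrorDist_nonneg x y
  have hn := eucDist_nonneg x y
  rw [← sq_eq_sq₀ (sinh_nonneg_iff.2 (dG_nonneg hx hy)) (by positivity), sinh_sq, cosh_dG hx hy,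
    div_pow, mul_pow (mirrorDist x y), sub_eq_iff_eq_add.1 (sq_mirrorDist_sub_sq_eucDist x y)]
  field_simp
  ring

lemma exp_dG (hx : 0 < x.2.2) (hy : 0 < y.2.2) :
    exp (dG x y) = (mirrorDist x y + eucDist x y) ^ 2 / (4 * (x.2.2 * y.2.2)) := by
  rw [← cosh_add_sinh, cosh_dG hx hy, sinh_dG hx hy, add_sq,
    sub_eq_iff_eq_add.1 (sq_mirrorDist_sub_sq_eucDist x y)]
  field_simp
  ring

lemma exp_neg_dG (hx : 0 < x.2.2) (hy : 0 < y.2.2) :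
    exp (-dG x y) =
      (mirrorDist x y - eucDist x y) / (mirrorDist x y + eucDist x y) := by
  have hp := mirrorDist_pos hx hy
  have hn := eucDist_nonneg x y
  rw [Real.exp_neg, exp_dG hx hy, ← sq_mirrorDist_sub_sq_eucDist, inv_div, sq_sub_sq]
  field_simp

lemma dG_eq_log (hx : 0 < x.2.2) (hy : 0 < y.2.2) :
    dG x y = 2 * log (mirrorDist x y + eucDist x y) - log 4 - log x.2.2 - log y.2.2 := by
  have hp := mirrorDist_pos hx hy
  have hn := eucDist_nonneg x y
  rw [← Real.log_exp (dG x y), exp_dG hx hy, Real.log_div (by positivity) (by positivity),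
    Real.log_mul (by positivity) (by positivity), Real.log_mul hx.ne' hy.ne', Real.log_pow]
  push_cast
  ring

lemma dG_eq_zero_iff (hx : 0 < x.2.2) (hy : 0 < y.2.2) : dG x y = 0 ↔ eucDist x y = 0 := by
  rw [← Real.sinh_eq_zero, sinh_dG hx hy, div_eq_zero_iff, mul_eq_zero,
    or_iff_right (mirrorDist_pos hx hy).ne', or_iff_left (by positivity)]

lemma dG_pos (hx : 0 < x.2.2) (hy : 0 < y.2.2) (hxy : 0 < eucDist x y) : 0 < dG x y :=
  (dG_nonneg hx hy).lt_of_ne' (mt (dG_eq_zero_iff hx hy).1 hxy.ne')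

lemma abs_log_sub_log_le_dG (hx : 0 < x.2.2) (hy : 0 < y.2.2) :
    |log x.2.2 - log y.2.2| ≤ dG x y := by
  rw [← abs_of_nonneg (dG_nonneg hx hy), ← Real.cosh_le_cosh, cosh_dG hx hy, Real.cosh_eq, neg_sub,
    Real.exp_sub, Real.exp_sub, Real.exp_log hx, Real.exp_log hy, sq_eucDist]
  field_simp
  nlinarith [sq_nonneg (x.1 - y.1), sq_nonneg (x.2.1 - y.2.1)]

lemma eucDist_div_mirrorDist_le_dG (hx : 0 < x.2.2) (hy : 0 < y.2.2) :
    eucDist x y / mirrorDist x y ≤ dG x y := by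
  have hp := mirrorDist_pos hx hy
  have hn := eucDist_nonneg x y
  have hnp := (eucDist_lt_mirrorDist hx hy).le
  have hexp : 1 - dG x y ≤ exp (-dG x y) := by linarith [Real.add_one_le_exp (-dG x y)]
  rw [exp_neg_dG hx hy, le_div_iff₀ (by positivity)] at hexp
  rw [div_le_iff₀ hp]
  nlinarith [mul_nonneg (dG_nonneg hx hy) (sub_nonneg.2 hnp)]

lemma dG_mul_mirrorDist_le (hx : 0 < x.2.2) (hy : 0 < y.2.2) :
    dG x y * mirrorDist x y ≤ (2 + dG x y) * eucDist x y := by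
  have hnp := sub_pos.2 (eucDist_lt_mirrorDist hx hy)
  have hexp := Real.add_one_le_exp (dG x y)
  rw [← neg_neg (dG x y), Real.exp_neg, exp_neg_dG hx hy, inv_div, neg_neg, le_div_iff₀ hnp] at hexp
  linarith

lemma one_add_sq_div_two_le_cosh (d : ℝ) : 1 + d ^ 2 / 2 ≤ cosh d := by
  have hsinh : |d / 2| ≤ |sinh (d / 2)| := by
    rw [Real.abs_sinh]
    exact Real.self_le_sinh_iff.2 (abs_nonneg _)
  have hcosh := Real.cosh_two_mul (d / 2)
  rw [mul_div_cancel₀ d two_ne_zero, Real.cosh_sq] at hcosh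
  linarith [sq_le_sq.2 hsinh]

lemma mul_sq_dG_le (hx : 0 < x.2.2) (hy : 0 < y.2.2) :
    x.2.2 * y.2.2 * dG x y ^ 2 ≤ eucDist x y ^ 2 := by
  have hcosh : dG x y ^ 2 / 2 ≤ eucDist x y ^ 2 / (2 * (x.2.2 * y.2.2)) := by
    linarith [one_add_sq_div_two_le_cosh (dG x y), cosh_dG hx hy]
  rw [div_le_div_iff₀ two_pos (by positivity)] at hcosh
  linarith

lemma gE_pos : (0 : ℝ) < gE.2.2 := one_pos

lemma dG_gE_left (x : G) : dG gE x = rG x := by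
  simp [dG, gMul, gInv, gE]

lemma rG_nonneg (hx : 0 < x.2.2) : 0 ≤ rG x :=
  dG_gE_left x ▸ dG_nonneg gE_pos hx

lemma cosh_rG (hx : 0 < x.2.2) : cosh (rG x) = coshArg x := by
  refine cosh_arcosh ?_
  rw [coshArg]
  field_simp
  nlinarith [sq_nonneg (x.2.2 - 1), sq_nonneg x.1, sq_nonneg x.2.1]

lemma normG_le_exp_rG (hx : 0 < x.2.2) : normG x ≤ exp (rG x) := by
  have hsq : normG x ^ 2 = x.1 ^ 2 + x.2.1 ^ 2 := Real.sq_sqrt (by positivity)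
  calc normG x ≤ coshArg x := by
        rw [coshArg, ← hsq]
        field_simp
        nlinarith [sq_nonneg (x.2.2 - normG x)]
    _ = cosh (rG x) := (cosh_rG hx).symm
    _ ≤ exp (rG x) := by
        rw [← Real.cosh_add_sinh]
        exact le_add_of_nonneg_right (Real.sinh_nonneg_iff.2 (rG_nonneg hx))

end UpperHalfSpace

/-! ### Radial integrals -/

lemma setLIntegral_Ioi_ofReal_deriv {g g' : ℝ → ℝ} {a l : ℝ}
    (hderiv : ∀ x ∈ Ici a, HasDerivAt g (g' x) x) (hnonneg : ∀ x ∈ Ioi a, 0 ≤ g' x)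
    (hlim : Tendsto g atTop (nhds l)) :
    ∫⁻ x in Ioi a, ENNReal.ofReal (g' x) = ENNReal.ofReal (l - g a) := by
  have hcont := (hderiv a self_mem_Ici).continuousAt.continuousWithinAt (s := Ici a)
  have hderiv' : ∀ x ∈ Ioi a, HasDerivAt g (g' x) x := fun x hx ↦ hderiv x (mem_Ici_of_Ioi hx)
  rw [← integral_Ioi_of_hasDerivAt_of_nonneg hcont hderiv' hnonneg hlim,
    ofReal_integral_eq_lintegral_ofReal
      (integrableOn_Ioi_deriv_of_nonneg hcont hderiv' hnonneg hlim)]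
  filter_upwards [self_mem_ae_restrict measurableSet_Ioi] with x hx using hnonneg x hx

lemma lintegral_ofReal_inv_sq_add_sq {m : ℝ} (hm : 0 < m) :
    ∫⁻ u : ℝ, ENNReal.ofReal (1 / (u ^ 2 + m ^ 2)) = ENNReal.ofReal (π / m) := by
  have hunit : ∫⁻ u : ℝ, ENNReal.ofReal ((1 + u ^ 2)⁻¹) = ENNReal.ofReal π := by
    rw [← integral_univ_inv_one_add_sq,
      ofReal_integral_eq_lintegral_ofReal integrable_inv_one_add_sq]
    exact ae_of_all _ fun u ↦ by positivity
  have hscale (u : ℝ) : ENNReal.ofReal (1 / (u ^ 2 + m ^ 2)) =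
      ENNReal.ofReal (1 / m ^ 2) * ENNReal.ofReal ((1 + (0 + m⁻¹ * u) ^ 2)⁻¹) := by
    rw [← ENNReal.ofReal_mul (by positivity)]
    congr 1
    field_simp
    ring
  simp_rw [hscale]
  rw [lintegral_const_mul' _ _ ENNReal.ofReal_ne_top,
    lintegral_comp_add_mul (fun u ↦ ENNReal.ofReal ((1 + u ^ 2)⁻¹)) 0 (inv_pos.2 hm).ne', hunit,
    inv_inv, abs_of_pos hm, ← ENNReal.ofReal_mul hm.le, ← ENNReal.ofReal_mul (by positivity)]
  congr 1
  field_simp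

lemma setLIntegral_Ioi_comp_sq (φ : ℝ → ℝ≥0∞) :
    ∫⁻ r in Ioi (0 : ℝ), ENNReal.ofReal (2 * r) * φ (r ^ 2) = ∫⁻ s in Ioi (0 : ℝ), φ s := by
  have himage : (fun r : ℝ ↦ r ^ 2) '' Ioi 0 = Ioi 0 := by
    ext s
    refine ⟨?_, fun hs ↦ ⟨√s, Real.sqrt_pos.2 hs, Real.sq_sqrt (le_of_lt hs)⟩⟩
    rintro ⟨r, hr, rfl⟩
    exact pow_pos (mem_Ioi.1 hr) 2
  have hinj : InjOn (fun r : ℝ ↦ r ^ 2) (Ioi 0) := fun r hr r' hr' h ↦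
    (sq_eq_sq₀ (le_of_lt hr) (le_of_lt hr')).1 h
  have hderiv : ∀ r ∈ Ioi (0 : ℝ), HasDerivWithinAt (fun r : ℝ ↦ r ^ 2) (2 * r) (Ioi 0) r :=
    fun r _ ↦ by simpa using (hasDerivAt_pow 2 r).hasDerivWithinAt
  conv_rhs => rw [← himage]
  rw [lintegral_image_eq_lintegral_abs_deriv_mul measurableSet_Ioi hderiv hinj]
  refine setLIntegral_congr_fun measurableSet_Ioi fun r hr ↦ ?_
  simp only [abs_of_pos (mul_pos two_pos (mem_Ioi.1 hr))]

lemma lintegral_lintegral_radial {φ : ℝ → ℝ≥0∞} (hφ : Measurable φ) (c₁ c₂ : ℝ) :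
    ∫⁻ x₁ : ℝ, ∫⁻ x₂ : ℝ, φ ((x₁ - c₁) ^ 2 + (x₂ - c₂) ^ 2) =
      ENNReal.ofReal π * ∫⁻ s in Ioi (0 : ℝ), φ s := by
  have hpolar (p : ℝ × ℝ) : φ ((polarCoord.symm p).1 ^ 2 + (polarCoord.symm p).2 ^ 2) =
      φ (p.1 ^ 2) := by
    rw [polarCoord_symm_apply, mul_pow, mul_pow, ← mul_add, cos_sq_add_sin_sq, mul_one]
  have hshift (x₁ : ℝ) : ∫⁻ x₂ : ℝ, φ ((x₁ - c₁) ^ 2 + (x₂ - c₂) ^ 2) =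
      ∫⁻ x₂ : ℝ, φ ((x₁ - c₁) ^ 2 + x₂ ^ 2) :=
    lintegral_sub_right_eq_self (fun x₂ : ℝ ↦ φ ((x₁ - c₁) ^ 2 + x₂ ^ 2)) c₂
  simp_rw [hshift]
  rw [lintegral_sub_right_eq_self (fun x₁ : ℝ ↦ ∫⁻ x₂ : ℝ, φ (x₁ ^ 2 + x₂ ^ 2)) c₁,
    ← lintegral_prod (fun p : ℝ × ℝ ↦ φ (p.1 ^ 2 + p.2 ^ 2)) (by fun_prop),
    ← Measure.volume_eq_prod, ← lintegral_comp_polarCoord_symm]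
  simp_rw [hpolar, smul_eq_mul]
  rw [polarCoord_target, Measure.volume_eq_prod, ← Measure.prod_restrict,
    lintegral_prod _ (by fun_prop), ← setLIntegral_Ioi_comp_sq φ,
    ← lintegral_const_mul' _ _ ENNReal.ofReal_ne_top]
  refine setLIntegral_congr_fun measurableSet_Ioi fun r _ ↦ ?_
  dsimp only
  rw [lintegral_const, Measure.restrict_apply MeasurableSet.univ, univ_inter, Real.volume_Ioo,
    ENNReal.ofReal_mul zero_le_two, sub_neg_eq_add, ← two_mul, ENNReal.ofReal_mul zero_le_two]
  ring

lemma lintegral_ρG_radial_mul_log {φ ψ : ℝ → ℝ≥0∞} (hφ : Measurable φ) (hψ : Measurable ψ) :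
    ∫⁻ x : G, φ (x.1 ^ 2 + x.2.1 ^ 2) * ψ (log x.2.2) ∂ρG =
      ENNReal.ofReal π * (∫⁻ s in Ioi (0 : ℝ), φ s) * ∫⁻ u : ℝ, ψ u := by
  rw [lintegral_ρG (by fun_prop), ← lintegral_const_mul _ hψ]
  have hplane := lintegral_lintegral_radial hφ 0 0
  have hmeas : Measurable fun x₁ : ℝ ↦ ∫⁻ x₂ : ℝ, φ (x₁ ^ 2 + x₂ ^ 2) :=
    Measurable.lintegral_prod_right' (f := fun p : ℝ × ℝ ↦ φ (p.1 ^ 2 + p.2 ^ 2)) (by fun_prop)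
  simp only [sub_zero] at hplane
  refine lintegral_congr fun u ↦ ?_
  simp_rw [Real.log_exp]
  rw [← hplane, ← lintegral_mul_const _ hmeas]
  exact lintegral_congr fun x₁ ↦ lintegral_mul_const _ (by fun_prop)

lemma lintegral_setLIntegral_Ioi_abs {h : ℝ → ℝ≥0∞} (hh : Measurable h) :
    ∫⁻ u : ℝ, ∫⁻ d in Ioi |u|, h d = ∫⁻ d in Ioi (0 : ℝ), ENNReal.ofReal (2 * d) * h d := by
  have hset : MeasurableSet {p : ℝ × ℝ | |p.1| < p.2} :=
    measurableSet_lt (by fun_prop) (by fun_prop)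
  calc ∫⁻ u : ℝ, ∫⁻ d in Ioi |u|, h d
      = ∫⁻ u : ℝ, ∫⁻ d : ℝ, {p : ℝ × ℝ | |p.1| < p.2}.indicator (fun p ↦ h p.2) (u, d) := by
        refine lintegral_congr fun u ↦ ?_
        rw [← lintegral_indicator measurableSet_Ioi]
        rfl
    _ = ∫⁻ d : ℝ, ∫⁻ u : ℝ, {p : ℝ × ℝ | |p.1| < p.2}.indicator (fun p ↦ h p.2) (u, d) :=
        lintegral_lintegral_swap ((hh.comp measurable_snd).indicator hset).aemeasurable
    _ = ∫⁻ d : ℝ, ENNReal.ofReal (2 * d) * h d := by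
        refine lintegral_congr fun d ↦ ?_
        have hslice (u : ℝ) : {p : ℝ × ℝ | |p.1| < p.2}.indicator (fun p ↦ h p.2) (u, d) =
            (Ioo (-d) d).indicator (fun _ ↦ h d) u := by
          simp only [indicator, mem_ofPred_eq, mem_Ioo, abs_lt]
        simp_rw [hslice]
        rw [lintegral_indicator measurableSet_Ioo, setLIntegral_const, Real.volume_Ioo, mul_comm,
          sub_neg_eq_add, two_mul]
    _ = ∫⁻ d in Ioi (0 : ℝ), ENNReal.ofReal (2 * d) * h d := by
        rw [← lintegral_indicator measurableSet_Ioi]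
        refine lintegral_congr fun d ↦ ?_
        by_cases hd : 0 < d
        · simp [hd]
        · have hd' : 2 * d ≤ 0 := by linarith
          simp [hd, ENNReal.ofReal_of_nonpos hd']

lemma image_cosh_sub_cosh (u : ℝ) :
    (fun d ↦ 2 * exp u * (cosh d - cosh u)) '' Ioi |u| = Ioi 0 := by
  ext s
  constructor
  · rintro ⟨d, hd, rfl⟩
    have hd' : cosh u < cosh d := Real.cosh_lt_cosh.2 ((mem_Ioi.1 hd).trans_le (le_abs_self d))
    exact mul_pos (by positivity) (sub_pos.2 hd')
  · intro hs
    have hcosh : cosh u < cosh u + s / (2 * exp u) := lt_add_of_pos_right _ (by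
      have := mem_Ioi.1 hs
      positivity)
    have hone := (Real.one_le_cosh u).trans hcosh.le
    refine ⟨arcosh (cosh u + s / (2 * exp u)), ?_, ?_⟩
    · rw [mem_Ioi, ← abs_of_nonneg (arcosh_nonneg hone), ← Real.cosh_lt_cosh, cosh_arcosh hone]
      exact hcosh
    · simp only [cosh_arcosh hone]
      field_simp
      ring

lemma coshArg_exp (x₁ x₂ u : ℝ) :
    coshArg (x₁, x₂, exp u) = cosh u + (x₁ ^ 2 + x₂ ^ 2) / (2 * exp u) := by
  rw [coshArg, Real.cosh_eq, Real.exp_neg]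
  field_simp

lemma setLIntegral_comp_arcosh (u : ℝ) (g : ℝ → ℝ≥0∞) :
    ∫⁻ s in Ioi (0 : ℝ), g (arcosh (cosh u + s / (2 * exp u))) =
      ENNReal.ofReal (2 * exp u) * ∫⁻ d in Ioi |u|, ENNReal.ofReal (sinh d) * g d := by
  have hinj : InjOn (fun d ↦ 2 * exp u * (cosh d - cosh u)) (Ioi |u|) := by
    intro d hd d' hd' h
    have hcosh : cosh d = cosh d' := by
      simpa [(exp_pos u).ne'] using h
    exact Real.cosh_injOn ((abs_nonneg u).trans (le_of_lt hd))
      ((abs_nonneg u).trans (le_of_lt hd')) hcosh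
  have hderiv : ∀ d ∈ Ioi |u|, HasDerivWithinAt (fun d ↦ 2 * exp u * (cosh d - cosh u))
      (2 * exp u * sinh d) (Ioi |u|) d := fun d _ ↦
    (((Real.hasDerivAt_cosh d).sub_const _).const_mul _).hasDerivWithinAt
  rw [← image_cosh_sub_cosh u,
    lintegral_image_eq_lintegral_abs_deriv_mul measurableSet_Ioi hderiv hinj,
    ← lintegral_const_mul' _ _ ENNReal.ofReal_ne_top]
  refine setLIntegral_congr_fun measurableSet_Ioi fun d hd ↦ ?_
  have hd := (abs_nonneg u).trans_lt (mem_Ioi.1 hd)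
  rw [mul_div_cancel_left₀ _ (by positivity), add_sub_cancel, arcosh_cosh hd.le,
    abs_of_pos (mul_pos (by positivity) (Real.sinh_pos_iff.2 hd)),
    ENNReal.ofReal_mul (by positivity), mul_assoc]

@[fun_prop]
lemma measurable_rG : Measurable rG := by
  unfold rG coshArg
  fun_prop

lemma lintegral_sqrt_deltaG_mul_comp_rG {g : ℝ → ℝ≥0∞} (hg : Measurable g) :
    ∫⁻ x, ENNReal.ofReal √(deltaG x) * g (rG x) ∂ρG =
      ENNReal.ofReal (4 * π) * ∫⁻ r in Ioi (0 : ℝ), ENNReal.ofReal (r * sinh r) * g r := by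
  have hlayer (u : ℝ) : ∫⁻ x₁ : ℝ, ∫⁻ x₂ : ℝ,
      ENNReal.ofReal √(deltaG (x₁, x₂, exp u)) * g (rG (x₁, x₂, exp u)) =
      ENNReal.ofReal (2 * π) * ∫⁻ d in Ioi |u|, ENNReal.ofReal (sinh d) * g d := by
    have hmeas : Measurable fun s ↦ g (arcosh (cosh u + s / (2 * exp u))) := by
      unfold arcosh
      fun_prop
    have hplane := lintegral_lintegral_radial hmeas 0 0
    simp only [sub_zero] at hplane
    simp_rw [fun x₁ x₂ ↦ sqrt_deltaG (x := (x₁, x₂, exp u)) (exp_pos u), rG_eq_arcosh, coshArg_exp,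
      lintegral_const_mul' _ _ ENNReal.ofReal_ne_top]
    rw [hplane, setLIntegral_comp_arcosh, ← mul_assoc, ← mul_assoc,
      ← ENNReal.ofReal_mul (by positivity), ← ENNReal.ofReal_mul (by positivity)]
    congr 2
    field_simp
  rw [lintegral_ρG (by fun_prop)]
  simp_rw [hlayer]
  rw [lintegral_const_mul' _ _ ENNReal.ofReal_ne_top,
    lintegral_setLIntegral_Ioi_abs (h := fun d ↦ ENNReal.ofReal (sinh d) * g d) (by fun_prop),
    show 4 * π = 2 * π * 2 by ring, ENNReal.ofReal_mul (q := 2) (by positivity), mul_assoc,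
    ← lintegral_const_mul' (ENNReal.ofReal 2) _ ENNReal.ofReal_ne_top]
  congr 1
  refine setLIntegral_congr_fun measurableSet_Ioi fun r hr ↦ ?_
  have hr := mem_Ioi.1 hr
  simp only [ENNReal.ofReal_mul hr.le, ENNReal.ofReal_mul two_pos.le, mul_assoc]

lemma setLIntegral_Ioi_sq_mul_div_sq {t : ℝ} (ht : 0 < t) :
    ∫⁻ r in Ioi (0 : ℝ), ENNReal.ofReal (r ^ 2 * t / (t ^ 2 + r ^ 2) ^ 2) =
      ENNReal.ofReal (π / 4) := by
  have hderiv (r : ℝ) : HasDerivAt (fun r ↦ (arctan (r / t) - t * (r / (t ^ 2 + r ^ 2))) / 2)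
      (r ^ 2 * t / (t ^ 2 + r ^ 2) ^ 2) r := by
    have hden : HasDerivAt (fun r : ℝ ↦ t ^ 2 + r ^ 2) (2 * r) r := by
      simpa using (hasDerivAt_pow 2 r).const_add (t ^ 2)
    have harctan := ((hasDerivAt_id r).div_const t).arctan
    have hquot := ((hasDerivAt_id r).div hden (by positivity)).const_mul t
    refine ((harctan.sub hquot).div_const 2).congr_deriv ?_
    simp only [id]
    field_simp
    ring
  have hlim : Tendsto (fun r ↦ (arctan (r / t) - t * (r / (t ^ 2 + r ^ 2))) / 2) atTop
      (nhds (π / 4)) := by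
    have harctan : Tendsto (fun r ↦ arctan (r / t)) atTop (nhds (π / 2)) :=
      (tendsto_arctan_atTop.mono_right nhdsWithin_le_nhds).comp (tendsto_id.atTop_div_const ht)
    have hquot : Tendsto (fun r : ℝ ↦ r / (t ^ 2 + r ^ 2)) atTop (nhds 0) := by
      refine squeeze_zero' ?_ ?_ tendsto_inv_atTop_zero
      · filter_upwards [eventually_ge_atTop 0] with r hr
        positivity
      · filter_upwards [eventually_gt_atTop 0] with r hr
        rw [div_le_iff₀ (by positivity)]
        field_simp
        nlinarith
    convert (harctan.sub (hquot.const_mul t)).div_const 2 using 2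
    ring
  rw [setLIntegral_Ioi_ofReal_deriv (fun r _ ↦ hderiv r) (fun r _ ↦ by positivity) hlim]
  simp

@[fun_prop]
lemma measurable_poissonK (t : ℝ) : Measurable (poissonK t) := by
  have hset : MeasurableSet {x : G | rG x = 0} := measurable_rG (measurableSet_singleton 0)
  have hratio : Measurable fun x ↦ if rG x = 0 then 1 else rG x / sinh (rG x) :=
    Measurable.ite hset measurable_const (by fun_prop)
  unfold poissonK
  fun_prop

lemma lintegral_poissonK {t : ℝ} (ht : 0 < t) :
    ∫⁻ x, ENNReal.ofReal (poissonK t x) ∂ρG = 1 := by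
  set g : ℝ → ℝ := fun r ↦
    (π ^ 2)⁻¹ * (if r = 0 then 1 else r / sinh r) * (t / (t ^ 2 + r ^ 2) ^ 2) with hg
  have hgm : Measurable g := by
    have : Measurable fun r ↦ if r = 0 then 1 else r / sinh r :=
      Measurable.ite (measurableSet_singleton 0) measurable_const (by fun_prop)
    fun_prop
  have hK (x : G) : ENNReal.ofReal (poissonK t x) =
      ENNReal.ofReal √(deltaG x) * ENNReal.ofReal (g (rG x)) := by
    rw [← ENNReal.ofReal_mul (Real.sqrt_nonneg _), poissonK, hg]
    congr 1
    ring
  simp_rw [hK]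
  rw [lintegral_sqrt_deltaG_mul_comp_rG hgm.ennreal_ofReal]
  have hradial : ∀ r ∈ Ioi (0 : ℝ), ENNReal.ofReal (r * sinh r) * ENNReal.ofReal (g r) =
      ENNReal.ofReal (π ^ 2)⁻¹ * ENNReal.ofReal (r ^ 2 * t / (t ^ 2 + r ^ 2) ^ 2) := by
    intro r hr
    have hr := mem_Ioi.1 hr
    have := Real.sinh_pos_iff.2 hr
    rw [← ENNReal.ofReal_mul (by positivity), ← ENNReal.ofReal_mul (by positivity), hg]
    simp only [if_neg hr.ne']
    congr 1
    field_simp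
  rw [setLIntegral_congr_fun measurableSet_Ioi hradial,
    lintegral_const_mul' _ _ ENNReal.ofReal_ne_top, setLIntegral_Ioi_sq_mul_div_sq ht,
    ← ENNReal.ofReal_mul (by positivity), ← ENNReal.ofReal_mul (by positivity),
    ← ENNReal.ofReal_one]
  congr 1
  field_simp

/-! ### The convolution kernel -/

/-- The radial part of the Poisson kernel: up to the factor `1 / (π² p n)`, with `p` and `n` the
mirror and Euclidean distances, `convKernel t x z` is `poissonProfile t (dG z x)`. -/
def poissonProfile (t d : ℝ) : ℝ := 2 * d * t / (t ^ 2 + d ^ 2) ^ 2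

/-- The kernel of `f ↦ f ∗ q_t` with respect to `ρG`, see `convPoisson_eq_integral_convKernel`. -/
def convKernel (t : ℝ) (x z : G) : ℝ := deltaG z * poissonK t (gMul (gInv z) x)

section Kernel

variable {t d : ℝ} {x z : G}

lemma poissonProfile_nonneg (ht : 0 < t) (hd : 0 ≤ d) : 0 ≤ poissonProfile t d := by
  unfold poissonProfile
  positivity

lemma poissonProfile_le_inv_sq_add_sq (ht : 0 < t) (d : ℝ) :
    poissonProfile t d ≤ 1 / (t ^ 2 + d ^ 2) := by
  rw [poissonProfile, div_le_div_iff₀ (by positivity) (by positivity)]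
  nlinarith [two_mul_le_add_sq d t, sq_nonneg t, sq_nonneg d]

lemma poissonProfile_le_inv_sq (ht : 0 < t) (hd : 0 < d) : poissonProfile t d ≤ 1 / d ^ 2 :=
  (poissonProfile_le_inv_sq_add_sq ht d).trans
    (one_div_le_one_div_of_le (by positivity) (le_add_of_nonneg_left (sq_nonneg t)))

lemma hasDerivAt_poissonProfile (ht : 0 < t) (d : ℝ) :
    HasDerivAt (poissonProfile t) (2 * t * (t ^ 2 - 3 * d ^ 2) / (t ^ 2 + d ^ 2) ^ 3) d := by
  have hnum : HasDerivAt (fun d : ℝ ↦ 2 * d * t) (2 * t) d := by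
    simpa using ((hasDerivAt_id d).const_mul 2).mul_const t
  have hden : HasDerivAt (fun d : ℝ ↦ (t ^ 2 + d ^ 2) ^ 2) (2 * (t ^ 2 + d ^ 2) * (2 * d)) d := by
    simpa using ((hasDerivAt_pow 2 d).const_add (t ^ 2)).fun_pow 2
  refine (hnum.div hden (by positivity)).congr_deriv ?_
  field_simp
  ring

lemma abs_deriv_poissonProfile_le (ht : 0 < t) (hd : 0 < d) :
    |2 * t * (t ^ 2 - 3 * d ^ 2) / (t ^ 2 + d ^ 2) ^ 3| ≤ 6 / d ^ 3 := by
  have habs : |t ^ 2 - 3 * d ^ 2| ≤ 3 * (t ^ 2 + d ^ 2) := by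
    rw [abs_le]
    constructor <;> nlinarith [sq_nonneg t, sq_nonneg d]
  have hcubic : t * d ^ 3 ≤ (t ^ 2 + d ^ 2) ^ 2 := by
    nlinarith [two_mul_le_add_sq t d, sq_nonneg t, sq_nonneg d, mul_nonneg ht.le hd.le]
  rw [abs_div, abs_mul, abs_of_pos (by positivity : 0 < 2 * t),
    abs_of_pos (by positivity : 0 < (t ^ 2 + d ^ 2) ^ 3), div_le_div_iff₀ (by positivity)
    (by positivity)]
  calc 2 * t * |t ^ 2 - 3 * d ^ 2| * d ^ 3 = 2 * |t ^ 2 - 3 * d ^ 2| * (t * d ^ 3) := by ring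
    _ ≤ 2 * (3 * (t ^ 2 + d ^ 2)) * (t ^ 2 + d ^ 2) ^ 2 := by gcongr
    _ = 6 * (t ^ 2 + d ^ 2) ^ 3 := by ring

lemma abs_poissonProfile_sub_le {d' m : ℝ} (ht : 0 < t) (hm : 0 < m) (hd : m ≤ d) (hd' : m ≤ d') :
    |poissonProfile t d' - poissonProfile t d| ≤ 6 / m ^ 3 * |d' - d| := by
  refine (convex_Ici m).norm_image_sub_le_of_norm_hasDerivWithin_le
    (fun z _ ↦ (hasDerivAt_poissonProfile ht z).hasDerivWithinAt) (fun z hz ↦ ?_) hd hd'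
  have hz : m ≤ z := hz
  calc ‖2 * t * (t ^ 2 - 3 * z ^ 2) / (t ^ 2 + z ^ 2) ^ 3‖ ≤ 6 / z ^ 3 :=
        abs_deriv_poissonProfile_le ht (hm.trans_le hz)
    _ ≤ 6 / m ^ 3 := by gcongr

lemma inv_sq_pi_le_one : (π ^ 2)⁻¹ ≤ 1 :=
  inv_le_one_of_one_le₀ (one_le_pow₀ (by linarith [Real.pi_gt_three]))

lemma convKernel_gE (t : ℝ) (x : G) : convKernel t x gE = poissonK t x := by
  simp [convKernel, deltaG, gMul, gInv, gE]

lemma convKernel_eq (hx : 0 < x.2.2) (hz : 0 < z.2.2) (t : ℝ) :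
    convKernel t x z = (π ^ 2)⁻¹ * (1 / (x.2.2 * z.2.2)) *
      (if dG z x = 0 then 1 else dG z x / sinh (dG z x)) * (t / (t ^ 2 + dG z x ^ 2) ^ 2) := by
  have hdelta : deltaG z * √(deltaG (gMul (gInv z) x)) = 1 / (x.2.2 * z.2.2) := by
    rw [sqrt_deltaG (gMul_pos (gInv_pos hz) hx)]
    simp only [deltaG, gMul, gInv]
    field_simp
  rw [convKernel, poissonK, ← hdelta, dG]
  ring

lemma convKernel_eq_poissonProfile (hx : 0 < x.2.2) (hz : 0 < z.2.2) (hzx : 0 < eucDist z x)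
    (t : ℝ) : convKernel t x z =
      (π ^ 2)⁻¹ * (1 / (mirrorDist z x * eucDist z x)) * poissonProfile t (dG z x) := by
  have hd := dG_pos hz hx hzx
  have hp := mirrorDist_pos hz hx
  rw [convKernel_eq hx hz, if_neg hd.ne', sinh_dG hz hx, poissonProfile]
  field_simp

lemma div_sinh_mul_exp_le (hd : 0 < d) : d / sinh d * exp d ≤ 1 + 2 * d := by
  have hsq : exp (2 * d) = exp d ^ 2 := by rw [two_mul, Real.exp_add, sq]
  have hexp : 1 + 2 * d ≤ exp d ^ 2 := by linarith [Real.add_one_le_exp (2 * d)]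
  rw [div_mul_eq_mul_div, div_le_iff₀ (Real.sinh_pos_iff.2 hd), Real.sinh_eq, Real.exp_neg]
  field_simp
  linarith

lemma convKernel_nonneg (hx : 0 < x.2.2) (hz : 0 < z.2.2) (ht : 0 < t) : 0 ≤ convKernel t x z := by
  have hd := dG_nonneg hz hx
  have := Real.sinh_nonneg_iff.2 hd
  rw [convKernel_eq hx hz]
  split_ifs <;> positivity

lemma convKernel_le (hx : 0 < x.2.2) (hz : 0 < z.2.2) (hzx : 0 < eucDist z x) (ht : 0 < t) :
    convKernel t x z ≤ 1 / (mirrorDist z x * eucDist z x * dG z x ^ 2) := by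
  have hd := dG_pos hz hx hzx
  have hp := mirrorDist_pos hz hx
  rw [convKernel_eq_poissonProfile hx hz hzx]
  calc (π ^ 2)⁻¹ * (1 / (mirrorDist z x * eucDist z x)) * poissonProfile t (dG z x)
      ≤ 1 * (1 / (mirrorDist z x * eucDist z x)) * (1 / dG z x ^ 2) := by
        gcongr
        · exact poissonProfile_nonneg ht hd.le
        · exact inv_sq_pi_le_one
        · exact poissonProfile_le_inv_sq ht hd
    _ = 1 / (mirrorDist z x * eucDist z x * dG z x ^ 2) := by rw [one_mul, one_div_mul_one_div]

lemma one_add_two_mul_mul_le (ht : 0 < t) (d : ℝ) :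
    (1 + 2 * d) * (t / (t ^ 2 + d ^ 2) ^ 2) ≤ 1 / t ^ 3 + 1 / t ^ 2 := by
  have hfst : t / (t ^ 2 + d ^ 2) ^ 2 ≤ 1 / t ^ 3 := by
    calc t / (t ^ 2 + d ^ 2) ^ 2 ≤ t / (t ^ 2) ^ 2 := by
          gcongr
          exact le_add_of_nonneg_right (sq_nonneg d)
      _ = 1 / t ^ 3 := by field_simp
  have hsnd : poissonProfile t d ≤ 1 / t ^ 2 :=
    (poissonProfile_le_inv_sq_add_sq ht d).trans (one_div_le_one_div_of_le (by positivity)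
      (le_add_of_nonneg_right (sq_nonneg d)))
  calc (1 + 2 * d) * (t / (t ^ 2 + d ^ 2) ^ 2)
      = t / (t ^ 2 + d ^ 2) ^ 2 + poissonProfile t d := by rw [poissonProfile]; ring
    _ ≤ 1 / t ^ 3 + 1 / t ^ 2 := add_le_add hfst hsnd

lemma convKernel_le_of_pos (hx : 0 < x.2.2) (hz : 0 < z.2.2) (ht : 0 < t) :
    convKernel t x z ≤ 1 / x.2.2 ^ 2 * (1 / t ^ 3 + 1 / t ^ 2) := by
  have hd := dG_nonneg hz hx
  set d := dG z x with hd_def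
  have hz_inv : 1 / (x.2.2 * z.2.2) ≤ 1 / x.2.2 ^ 2 * exp d := by
    have hexp : exp (log x.2.2 - log z.2.2) ≤ exp d :=
      Real.exp_le_exp.2 (by linarith [(abs_le.1 (abs_log_sub_log_le_dG hz hx)).1])
    rw [Real.exp_sub, Real.exp_log hx, Real.exp_log hz] at hexp
    calc 1 / (x.2.2 * z.2.2) = 1 / x.2.2 ^ 2 * (x.2.2 / z.2.2) := by field_simp
      _ ≤ 1 / x.2.2 ^ 2 * exp d := by gcongr
  have hratio : (0 : ℝ) ≤ (if d = 0 then 1 else d / sinh d) ∧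
      (if d = 0 then 1 else d / sinh d) * exp d ≤ 1 + 2 * d := by
    split_ifs with h
    · simp [h]
    · have hd_pos := hd.lt_of_ne' h
      exact ⟨div_nonneg hd (Real.sinh_nonneg_iff.2 hd), div_sinh_mul_exp_le hd_pos⟩
  rw [convKernel_eq hx hz, ← hd_def]
  set ρ := if d = 0 then 1 else d / sinh d
  calc (π ^ 2)⁻¹ * (1 / (x.2.2 * z.2.2)) * ρ * (t / (t ^ 2 + d ^ 2) ^ 2)
      ≤ 1 * (1 / x.2.2 ^ 2 * exp d) * ρ * (t / (t ^ 2 + d ^ 2) ^ 2) := by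
        have := hratio.1
        gcongr
        exact inv_sq_pi_le_one
    _ = 1 / x.2.2 ^ 2 * (ρ * exp d * (t / (t ^ 2 + d ^ 2) ^ 2)) := by ring
    _ ≤ 1 / x.2.2 ^ 2 * ((1 + 2 * d) * (t / (t ^ 2 + d ^ 2) ^ 2)) := by
        gcongr
        exact hratio.2
    _ ≤ 1 / x.2.2 ^ 2 * (1 / t ^ 3 + 1 / t ^ 2) := by
        gcongr
        exact one_add_two_mul_mul_le ht d

lemma measurable_convKernel (t : ℝ) (x : G) : Measurable (convKernel t x) :=
  measurable_deltaG.mul ((measurable_poissonK t).comp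
    (measurable_gMul.comp (measurable_gInv.prodMk measurable_const)))

lemma ae_convKernel_norm_le (hx : 0 < x.2.2) (ht : 0 < t) :
    ∀ᵐ z ∂ρG, ‖convKernel t x z‖ ≤ 1 / x.2.2 ^ 2 * (1 / t ^ 3 + 1 / t ^ 2) := by
  filter_upwards [ae_pos_ρG] with z hz
  rw [Real.norm_of_nonneg (convKernel_nonneg hx hz ht)]
  exact convKernel_le_of_pos hx hz ht

lemma integrable_mul_convKernel {f : G → ℝ} (hf : Integrable f ρG) (hx : 0 < x.2.2) (ht : 0 < t) :
    Integrable (fun z ↦ f z * convKernel t x z) ρG :=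
  hf.mul_bdd (measurable_convKernel t x).aestronglyMeasurable (ae_convKernel_norm_le hx ht)

lemma convPoisson_eq_integral_convKernel {f : G → ℝ} (hf : AEStronglyMeasurable f ρG)
    (hx : 0 < x.2.2) (t : ℝ) : convPoisson f t x = ∫ z, f z * convKernel t x z ∂ρG := by
  have hmeas : Measurable fun z ↦ poissonK t (gMul (gInv z) x) :=
    (measurable_poissonK t).comp (measurable_gMul.comp (measurable_gInv.prodMk measurable_const))
  calc convPoisson f t x
      = ∫ y, (fun z ↦ f z * poissonK t (gMul (gInv z) x)) (gMul x (gInv y)) ∂ρG := by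
        refine integral_congr_ae ?_
        filter_upwards [ae_pos_ρG] with y hy
        have hcancel : gMul (gInv (gMul x (gInv y))) x = y := by
          rw [gInv_gMul_rev hx (gInv_pos hy), gInv_gInv hy, gMul_assoc, gInv_gMul_self hx, gMul_gE]
        simp only [hcancel]
    _ = ∫ z, deltaG z * (f z * poissonK t (gMul (gInv z) x)) ∂ρG :=
        integral_gMul_gInv hx (hf.mul hmeas.aestronglyMeasurable)
    _ = ∫ z, f z * convKernel t x z ∂ρG := by
        simp only [convKernel, mul_left_comm]

end Kernel

/-! ### Regularity of the kernel -/

lemma abs_log_sub_log_le {p q m : ℝ} (hm : 0 < m) (hp : m ≤ p) (hq : m ≤ q) :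
    |log p - log q| ≤ |p - q| / m := by
  have log_sub_log_le {p q : ℝ} (hp : m ≤ p) (hq : m ≤ q) : log p - log q ≤ |p - q| / m := by
    have hp₀ := hm.trans_le hp
    have hq₀ := hm.trans_le hq
    calc log p - log q = log (p / q) := (Real.log_div hp₀.ne' hq₀.ne').symm
      _ ≤ p / q - 1 := Real.log_le_sub_one_of_pos (by positivity)
      _ = (p - q) / q := by field_simp
      _ ≤ |p - q| / m := by
        gcongr
        exact le_abs_self _
  refine abs_sub_le_iff.2 ⟨log_sub_log_le hp hq, ?_⟩
  rw [abs_sub_comm]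
  exact log_sub_log_le hq hp

lemma abs_inv_mul_sub_inv_mul_le {n p n' p' Δ : ℝ} (hn : 0 < n) (hnp : n ≤ p) (hΔ : Δ ≤ n / 2)
    (hn' : |n' - n| ≤ Δ) (hp' : |p' - p| ≤ Δ) :
    |1 / (p' * n') - 1 / (p * n)| ≤ 6 * Δ / (n ^ 2 * p) := by
  have hp := hn.trans_le hnp
  have hΔ_nonneg := (abs_nonneg _).trans hn'
  have hn'_le : n / 2 ≤ n' := by linarith [(abs_le.1 hn').1]
  have hp'_le : n / 2 ≤ p' := by linarith [(abs_le.1 hp').1]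
  have hn'_pos : 0 < n' := by linarith
  have hp'_pos : 0 < p' := by linarith
  have hsplit : 1 / (p' * n') - 1 / (p * n) =
      (n - n') / (n * n' * p) + (p - p') / (n' * p * p') := by
    field_simp
    ring
  have hn_term : |(n - n') / (n * n' * p)| ≤ Δ / (n * (n / 2) * p) := by
    rw [abs_div, abs_of_pos (by positivity : 0 < n * n' * p), abs_sub_comm]
    gcongr
  have hp_term : |(p - p') / (n' * p * p')| ≤ Δ / ((n / 2) * p * (n / 2)) := by
    rw [abs_div, abs_of_pos (by positivity : 0 < n' * p * p'), abs_sub_comm]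
    gcongr
  calc |1 / (p' * n') - 1 / (p * n)|
      ≤ |(n - n') / (n * n' * p)| + |(p - p') / (n' * p * p')| := hsplit ▸ abs_add_le _ _
    _ ≤ Δ / (n * (n / 2) * p) + Δ / ((n / 2) * p * (n / 2)) := add_le_add hn_term hp_term
    _ = 6 * Δ / (n ^ 2 * p) := by
        field_simp
        ring

lemma abs_mul_sub_mul_le (a b c d : ℝ) : |a * b - c * d| ≤ |a - c| * |d| + |a| * |b - d| := by
  rw [← abs_mul, ← abs_mul]
  exact (abs_add_le _ _).trans' (le_of_eq (by ring_nf))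

section Regularity

variable {x y : G} {t Δ V : ℝ}

lemma abs_eucDist_sub_eucDist_gE_le (hΔ : |y.1| + |y.2.1| + |y.2.2 - 1| ≤ Δ) (x : G) :
    |eucDist y x - eucDist gE x| ≤ Δ :=
  (abs_eucDist_sub_eucDist_le y gE x).trans (by simpa [gE] using hΔ)

lemma abs_mirrorDist_sub_mirrorDist_gE_le (hΔ : |y.1| + |y.2.1| + |y.2.2 - 1| ≤ Δ) (x : G) :
    |mirrorDist y x - mirrorDist gE x| ≤ Δ :=
  (abs_mirrorDist_sub_mirrorDist_le y gE x).trans (by simpa [gE] using hΔ)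

lemma abs_dG_sub_rG_le (hx : 0 < x.2.2) (hy : 0 < y.2.2)
    (hΔ : |y.1| + |y.2.1| + |y.2.2 - 1| ≤ Δ) (hΔp : Δ ≤ mirrorDist gE x / 2)
    (hV : |log y.2.2| ≤ V) : |dG y x - rG x| ≤ 8 * Δ / mirrorDist gE x + V := by
  have hp := mirrorDist_pos gE_pos hx
  have hn := abs_le.1 (abs_eucDist_sub_eucDist_gE_le hΔ x)
  have hm := abs_le.1 (abs_mirrorDist_sub_mirrorDist_gE_le hΔ x)
  have hsum : |mirrorDist y x + eucDist y x - (mirrorDist gE x + eucDist gE x)| ≤ 2 * Δ :=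
    abs_le.2 ⟨by linarith, by linarith⟩
  have hlog := abs_log_sub_log_le (half_pos hp)
    (by linarith [eucDist_nonneg y x] : mirrorDist gE x / 2 ≤ mirrorDist y x + eucDist y x)
    (by linarith [eucDist_nonneg gE x] : mirrorDist gE x / 2 ≤ mirrorDist gE x + eucDist gE x)
  rw [← dG_gE_left, dG_eq_log hy hx, dG_eq_log gE_pos hx]
  set Λ := log (mirrorDist y x + eucDist y x) - log (mirrorDist gE x + eucDist gE x) with hΛ
  calc _ = |2 * Λ + -log y.2.2| := by
        rw [hΛ, show gE.2.2 = 1 from rfl, Real.log_one]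
        ring_nf
    _ ≤ 2 * |Λ| + |log y.2.2| := by
        simpa only [abs_mul, abs_two, abs_neg] using abs_add_le (2 * Λ) (-log y.2.2)
    _ ≤ 2 * (2 * Δ / (mirrorDist gE x / 2)) + V := by
        gcongr
        exact hlog.trans (by gcongr)
    _ = 8 * Δ / mirrorDist gE x + V := by
        field_simp
        ring

lemma abs_convKernel_sub_convKernel_le {z : G} (hx : 0 < x.2.2) (hy : 0 < y.2.2) (hz : 0 < z.2.2)
    (hyx : 0 < eucDist y x) (hzx : 0 < eucDist z x) (ht : 0 < t) :
    |convKernel t x y - convKernel t x z| ≤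
      |1 / (mirrorDist y x * eucDist y x) - 1 / (mirrorDist z x * eucDist z x)| *
          poissonProfile t (dG z x) +
        1 / (mirrorDist y x * eucDist y x) *
          |poissonProfile t (dG y x) - poissonProfile t (dG z x)| := by
  rw [convKernel_eq_poissonProfile hx hy hyx, convKernel_eq_poissonProfile hx hz hzx]
  have hprofile_nonneg := poissonProfile_nonneg ht (dG_nonneg hz hx)
  have hweight_nonneg : 0 ≤ 1 / (mirrorDist y x * eucDist y x) :=
    one_div_nonneg.2 (mul_nonneg (mirrorDist_nonneg y x) (eucDist_nonneg y x))
  set q := poissonProfile t (dG z x)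
  set q' := poissonProfile t (dG y x)
  set w := 1 / (mirrorDist z x * eucDist z x)
  set w' := 1 / (mirrorDist y x * eucDist y x)
  calc |(π ^ 2)⁻¹ * w' * q' - (π ^ 2)⁻¹ * w * q| = (π ^ 2)⁻¹ * |w' * q' - w * q| := by
        rw [mul_assoc, mul_assoc, ← mul_sub, abs_mul, abs_of_pos (by positivity)]
    _ ≤ |w' * q' - w * q| := mul_le_of_le_one_left (abs_nonneg _) inv_sq_pi_le_one
    _ ≤ |w' - w| * q + w' * |q' - q| := by
        simpa only [abs_of_nonneg hprofile_nonneg, abs_of_nonneg hweight_nonneg] using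
          abs_mul_sub_mul_le w' q' w q

lemma abs_convKernel_sub_convKernel_gE_le (hx : 0 < x.2.2) (hy : 0 < y.2.2) (ht : 0 < t)
    (hn : 0 < eucDist gE x) (hΔ : |y.1| + |y.2.1| + |y.2.2 - 1| ≤ Δ)
    (hΔn : Δ ≤ eucDist gE x / 2) (hV : |log y.2.2| ≤ V)
    (hW : 8 * Δ / mirrorDist gE x + V ≤ rG x / 2) :
    |convKernel t x y - convKernel t x gE| ≤
      6 * Δ / (eucDist gE x ^ 2 * mirrorDist gE x * rG x ^ 2) +
        192 * (8 * Δ / mirrorDist gE x + V) / (eucDist gE x * mirrorDist gE x * rG x ^ 3) := by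
  have hnp := (eucDist_lt_mirrorDist gE_pos hx).le
  have hn' := abs_eucDist_sub_eucDist_gE_le hΔ x
  have hp' := abs_mirrorDist_sub_mirrorDist_gE_le hΔ x
  have hd' := abs_dG_sub_rG_le hx hy hΔ (by linarith) hV
  have hweight := abs_inv_mul_sub_inv_mul_le hn hnp hΔn hn' hp'
  have hr : 0 < rG x := dG_gE_left x ▸ dG_pos gE_pos hx hn
  have hn'_le : eucDist gE x / 2 ≤ eucDist y x := by linarith [(abs_le.1 hn').1]
  have hp'_le : mirrorDist gE x / 2 ≤ mirrorDist y x := by linarith [(abs_le.1 hp').1]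
  have hprofile := abs_poissonProfile_sub_le ht (half_pos hr) (by linarith : rG x / 2 ≤ rG x)
    (by linarith [(abs_le.1 hd').1] : rG x / 2 ≤ dG y x)
  have hprofile_le := poissonProfile_le_inv_sq ht hr
  have hprofile_nonneg := poissonProfile_nonneg ht hr.le
  have hsub := abs_convKernel_sub_convKernel_le hx hy gE_pos (by linarith) hn ht
  rw [dG_gE_left] at hsub
  refine hsub.trans ?_
  set n := eucDist gE x
  set p := mirrorDist gE x
  have hp := hn.trans_le hnp
  have hweight_le : 1 / (mirrorDist y x * eucDist y x) ≤ 1 / (p / 2 * (n / 2)) :=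
    one_div_le_one_div_of_le (by positivity)
      (mul_le_mul hp'_le hn'_le (by positivity) (mirrorDist_nonneg y x))
  have hΔ_nonneg := (abs_nonneg _).trans hn'
  calc _ ≤ 6 * Δ / (n ^ 2 * p) * (1 / rG x ^ 2) +
          1 / (p / 2 * (n / 2)) * (6 / (rG x / 2) ^ 3 * (8 * Δ / p + V)) := by
        gcongr
        exact hprofile.trans (by gcongr)
    _ = _ := by
        field_simp
        ring

end Regularity

/-! ### Majorant profiles -/

lemma integrable_and_integral_eq_of_lintegral_ofReal {α : Type*} [MeasurableSpace α]
    {μ : Measure α} {F : α → ℝ} {I : ℝ} (hF : Measurable F) (hF₀ : 0 ≤ᵐ[μ] F) (hI : 0 ≤ I)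
    (h : ∫⁻ x, ENNReal.ofReal (F x) ∂μ = ENNReal.ofReal I) :
    Integrable F μ ∧ ∫ x, F x ∂μ = I := by
  refine ⟨(lintegral_ofReal_ne_top_iff_integrable hF.aestronglyMeasurable hF₀).1
    (h ▸ ENNReal.ofReal_ne_top), ?_⟩
  rw [integral_eq_lintegral_of_nonneg_ae hF₀ hF.aestronglyMeasurable, h, ENNReal.toReal_ofReal hI]

/-- The density `δ^{1/2} / (r³ sinh r)` cut off at the ball of radius `η`; it controls the
oscillation of the kernel at distances larger than `η`. -/
def tailProfile (η : ℝ) (x : G) : ℝ :=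
  √(deltaG x) * if η < rG x then 1 / (sinh (rG x) * rG x ^ 3) else 0

/-- The density `(1 + log² x₃)⁻¹ M / (x₁² + x₂² + M²)^{3/2}`, which controls the oscillation of the
kernel near the boundary `x₃ = 0`. -/
def boundaryProfile (M : ℝ) (x : G) : ℝ :=
  1 / (log x.2.2 ^ 2 + 1) * (M / √(x.1 ^ 2 + x.2.1 ^ 2 + M ^ 2) ^ 3)

/-- The density `(log² x₃ + s²)⁻¹` on the vertical cylinder of radius `M`. -/
def slabProfile (M s : ℝ) (x : G) : ℝ :=
  if x.1 ^ 2 + x.2.1 ^ 2 ≤ M ^ 2 then 1 / (log x.2.2 ^ 2 + s ^ 2) else 0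

lemma boundaryProfile_nonneg {M : ℝ} (hM : 0 ≤ M) (x : G) : 0 ≤ boundaryProfile M x := by
  unfold boundaryProfile
  positivity

lemma slabProfile_nonneg (M s : ℝ) (x : G) : 0 ≤ slabProfile M s x := by
  unfold slabProfile
  positivity

lemma tailProfile_nonneg {η : ℝ} (hη : 0 ≤ η) (x : G) : 0 ≤ tailProfile η x := by
  unfold tailProfile
  refine mul_nonneg (Real.sqrt_nonneg _) ?_
  split_ifs with h
  · have hr := hη.trans_lt h
    have := Real.sinh_pos_iff.2 hr
    positivity
  · exact le_rfl

lemma setLIntegral_Ioi_inv_sq {η : ℝ} (hη : 0 < η) :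
    ∫⁻ r in Ioi η, ENNReal.ofReal (1 / r ^ 2) = ENNReal.ofReal (1 / η) := by
  have hderiv : ∀ r ∈ Ici η, HasDerivAt (fun r : ℝ ↦ -r⁻¹) (1 / r ^ 2) r := fun r hr ↦ by
    simpa using (hasDerivAt_inv (hη.trans_le hr).ne').fun_neg
  rw [setLIntegral_Ioi_ofReal_deriv hderiv (fun r _ ↦ by positivity)
    (by simpa using tendsto_inv_atTop_zero.neg)]
  simp

lemma integral_tailProfile {η : ℝ} (hη : 0 < η) :
    Integrable (tailProfile η) ρG ∧ ∫ x, tailProfile η x ∂ρG = 4 * π / η := by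
  set g : ℝ → ℝ := fun r ↦ if η < r then 1 / (sinh r * r ^ 3) else 0 with hg
  have hgm : Measurable g :=
    Measurable.ite measurableSet_Ioi (by fun_prop) measurable_const
  have hmeas : Measurable (tailProfile η) :=
    measurable_deltaG.sqrt.mul (hgm.comp measurable_rG)
  refine integrable_and_integral_eq_of_lintegral_ofReal hmeas
    (ae_of_all _ (tailProfile_nonneg hη.le)) (by positivity) ?_
  have hradial : ∀ r ∈ Ioi (0 : ℝ), ENNReal.ofReal (r * sinh r) * ENNReal.ofReal (g r) =
      (Ioi η).indicator (fun r ↦ ENNReal.ofReal (1 / r ^ 2)) r := by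
    intro r hr
    have hr := mem_Ioi.1 hr
    have := Real.sinh_pos_iff.2 hr
    rw [← ENNReal.ofReal_mul (by positivity), hg]
    by_cases h : η < r
    · rw [indicator_of_mem (mem_Ioi.2 h)]
      simp only [if_pos h]
      congr 1
      field_simp
    · simp [h]
  simp_rw [tailProfile, ENNReal.ofReal_mul (Real.sqrt_nonneg _)]
  rw [lintegral_sqrt_deltaG_mul_comp_rG hgm.ennreal_ofReal,
    setLIntegral_congr_fun measurableSet_Ioi hradial, setLIntegral_indicator measurableSet_Ioi,
    inter_eq_left.2 (Ioi_subset_Ioi hη.le), setLIntegral_Ioi_inv_sq hη,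
    ← ENNReal.ofReal_mul (by positivity), mul_one_div]

lemma setLIntegral_Ioi_div_sqrt_cube {M : ℝ} (hM : 0 < M) :
    ∫⁻ q in Ioi (0 : ℝ), ENNReal.ofReal (M / √(q + M ^ 2) ^ 3) = ENNReal.ofReal 2 := by
  have hderiv : ∀ q ∈ Ici (0 : ℝ), HasDerivAt (fun q : ℝ ↦ -(2 * M) * (√(q + M ^ 2))⁻¹)
      (M / √(q + M ^ 2) ^ 3) q := by
    intro q hq
    have hq := mem_Ici.1 hq
    have hpos : 0 < q + M ^ 2 := by positivity
    refine (((((hasDerivAt_id q).add_const (M ^ 2)).sqrt hpos.ne').inv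
      (by positivity)).const_mul (-(2 * M))).congr_deriv ?_
    simp only [id]
    field_simp
  have hlim : Tendsto (fun q : ℝ ↦ -(2 * M) * (√(q + M ^ 2))⁻¹) atTop (nhds 0) := by
    have := (tendsto_inv_atTop_zero.comp (Real.tendsto_sqrt_atTop.comp
      (tendsto_atTop_add_const_right atTop (M ^ 2) tendsto_id))).const_mul (-(2 * M))
    simpa using this
  rw [setLIntegral_Ioi_ofReal_deriv hderiv (fun q _ ↦ by positivity) hlim]
  congr 1
  rw [zero_add, Real.sqrt_sq hM.le]
  field_simp
  ring

lemma integral_boundaryProfile {M : ℝ} (hM : 0 < M) :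
    Integrable (boundaryProfile M) ρG ∧ ∫ x, boundaryProfile M x ∂ρG = 2 * π ^ 2 := by
  have hmeas : Measurable (boundaryProfile M) := by
    unfold boundaryProfile
    fun_prop
  refine integrable_and_integral_eq_of_lintegral_ofReal hmeas
    (ae_of_all _ (boundaryProfile_nonneg hM.le)) (by positivity) ?_
  have hfactor (x : G) : ENNReal.ofReal (boundaryProfile M x) =
      ENNReal.ofReal (M / √(x.1 ^ 2 + x.2.1 ^ 2 + M ^ 2) ^ 3) *
        ENNReal.ofReal (1 / (log x.2.2 ^ 2 + 1 ^ 2)) := by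
    rw [boundaryProfile, ← ENNReal.ofReal_mul (by positivity), mul_comm, one_pow]
  simp_rw [hfactor]
  rw [lintegral_ρG_radial_mul_log (φ := fun q ↦ ENNReal.ofReal (M / √(q + M ^ 2) ^ 3))
    (ψ := fun u ↦ ENNReal.ofReal (1 / (u ^ 2 + 1 ^ 2))) (by fun_prop) (by fun_prop),
    setLIntegral_Ioi_div_sqrt_cube hM, lintegral_ofReal_inv_sq_add_sq one_pos,
    ← ENNReal.ofReal_mul (by positivity), ← ENNReal.ofReal_mul (by positivity)]
  congr 1
  ring

lemma integral_slabProfile (M : ℝ) {s : ℝ} (hs : 0 < s) :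
    Integrable (slabProfile M s) ρG ∧ ∫ x, slabProfile M s x ∂ρG = π ^ 2 * M ^ 2 / s := by
  have hmeas : Measurable (slabProfile M s) := by
    unfold slabProfile
    exact Measurable.ite (measurableSet_le (by fun_prop) (by fun_prop)) (by fun_prop)
      measurable_const
  refine integrable_and_integral_eq_of_lintegral_ofReal hmeas
    (ae_of_all _ (slabProfile_nonneg M s)) (by positivity) ?_
  have hfactor (x : G) : ENNReal.ofReal (slabProfile M s x) =
      (Iic (M ^ 2)).indicator 1 (x.1 ^ 2 + x.2.1 ^ 2) *
        ENNReal.ofReal (1 / (log x.2.2 ^ 2 + s ^ 2)) := by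
    by_cases h : x.1 ^ 2 + x.2.1 ^ 2 ≤ M ^ 2 <;> simp [slabProfile, h]
  simp_rw [hfactor]
  rw [lintegral_ρG_radial_mul_log (φ := (Iic (M ^ 2)).indicator 1)
    (ψ := fun u ↦ ENNReal.ofReal (1 / (u ^ 2 + s ^ 2)))
    (measurable_one.indicator measurableSet_Iic) (by fun_prop),
    lintegral_indicator_one measurableSet_Iic, Measure.restrict_apply measurableSet_Iic,
    inter_comm, Ioi_inter_Iic, Real.volume_Ioc, sub_zero, lintegral_ofReal_inv_sq_add_sq hs,
    ← ENNReal.ofReal_mul (by positivity), ← ENNReal.ofReal_mul (by positivity)]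
  congr 1
  ring

/-! ### Boxes centered at the identity -/

/-- The parallelepiped `[-M, M] × [-M, M] × [e⁻ᵐ, eᵐ]`. -/
def centeredBox (M m : ℝ) : Set G := Icc (-M) M ×ˢ (Icc (-M) M ×ˢ Icc (exp (-m)) (exp m))

lemma measurableSet_centeredBox (M m : ℝ) : MeasurableSet (centeredBox M m) :=
  measurableSet_Icc.prod (measurableSet_Icc.prod measurableSet_Icc)

section centeredBox

variable {M m : ℝ} {y : G}

lemma pos_of_mem_centeredBox (hy : y ∈ centeredBox M m) : 0 < y.2.2 :=
  (exp_pos _).trans_le hy.2.2.1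

lemma abs_log_le_of_mem_centeredBox (hy : y ∈ centeredBox M m) : |log y.2.2| ≤ m := by
  have hpos := pos_of_mem_centeredBox hy
  rw [abs_le, Real.le_log_iff_exp_le hpos, Real.log_le_iff_le_exp hpos]
  exact hy.2.2

lemma coord_le_of_mem_centeredBox (hm : m ≤ 1) (hy : y ∈ centeredBox M m) :
    |y.1| + |y.2.1| + |y.2.2 - 1| ≤ 2 * M + 2 * m := by
  obtain ⟨h₁, h₂, hlower, hupper⟩ := hy
  have hm₀ : 0 ≤ m := by
    have := Real.exp_le_exp.1 (hlower.trans hupper)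
    linarith
  have hexp := (abs_le.1 (Real.abs_exp_sub_one_le ((abs_of_nonneg hm₀).trans_le hm))).2
  rw [abs_of_nonneg hm₀] at hexp
  have h₃ : |y.2.2 - 1| ≤ 2 * m := by
    rw [abs_le]
    constructor <;> linarith [Real.add_one_le_exp (-m)]
  linarith [abs_le.2 h₁, abs_le.2 h₂]

lemma coord_le_exp_of_mem_centeredBox (hy : y ∈ centeredBox M m) :
    |y.1| + |y.2.1| + |y.2.2 - 1| ≤ 2 * M + exp m := by
  obtain ⟨h₁, h₂, hlower, hupper⟩ := hy
  have h₃ : |y.2.2 - 1| ≤ exp m := by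
    have hone : 1 ≤ exp m := by
      rw [Real.one_le_exp_iff]
      have := Real.exp_le_exp.1 (hlower.trans hupper)
      linarith
    rw [abs_le]
    constructor <;> linarith [exp_pos (-m)]
  linarith [abs_le.2 h₁, abs_le.2 h₂]

lemma setLIntegral_centeredBox {F : G → ℝ≥0∞} (hF : Measurable F) :
    ∫⁻ y in centeredBox M m, F y ∂ρG =
      ∫⁻ u in Icc (-m) m, ∫⁻ x₁ in Icc (-M) M, ∫⁻ x₂ in Icc (-M) M, F (x₁, x₂, exp u) := by
  have hmem (x₁ x₂ u : ℝ) : (centeredBox M m).indicator F (x₁, x₂, exp u) =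
      (Icc (-m) m).indicator (fun u ↦ (Icc (-M) M).indicator (fun x₁ ↦ (Icc (-M) M).indicator
        (fun x₂ ↦ F (x₁, x₂, exp u)) x₂) x₁) u := by
    simp only [indicator, centeredBox, mem_prod, mem_Icc, Real.exp_le_exp]
    split_ifs <;> tauto
  rw [← lintegral_indicator (measurableSet_centeredBox M m),
    lintegral_ρG (hF.indicator (measurableSet_centeredBox M m)),
    ← lintegral_indicator measurableSet_Icc]
  refine lintegral_congr fun u ↦ ?_
  simp_rw [hmem]
  by_cases hu : u ∈ Icc (-m) m
  · simp_rw [indicator_of_mem hu]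
    rw [← lintegral_indicator measurableSet_Icc]
    refine lintegral_congr fun x₁ ↦ ?_
    by_cases hx₁ : x₁ ∈ Icc (-M) M
    · simp_rw [indicator_of_mem hx₁]
      rw [lintegral_indicator measurableSet_Icc]
    · simp_rw [indicator_of_notMem hx₁, lintegral_zero]
  · simp_rw [indicator_of_notMem hu, lintegral_zero]

lemma ρG_centeredBox (hM : 0 ≤ M) (m : ℝ) :
    ρG (centeredBox M m) = ENNReal.ofReal ((2 * M) ^ 2 * (2 * m)) := by
  rw [← setLIntegral_one, setLIntegral_centeredBox measurable_const]
  simp only [setLIntegral_const, Real.volume_Icc, one_mul, sub_neg_eq_add, ← two_mul]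
  rw [← ENNReal.ofReal_mul (by positivity), ← ENNReal.ofReal_mul (by positivity), sq]

lemma setLIntegral_Ioc_inv_add {Q q : ℝ} (hQ : 0 ≤ Q) (hq : 0 < q) :
    ∫⁻ v in Ioc 0 Q, ENNReal.ofReal (1 / (v + q)) = ENNReal.ofReal (log (1 + Q / q)) := by
  have hderiv : ∀ v ∈ uIcc 0 Q, HasDerivAt (fun v ↦ log (v + q)) (1 / (v + q)) v := by
    intro v hv
    rw [uIcc_of_le hQ] at hv
    have hpos : 0 < v + q := by linarith [hv.1]
    exact ((hasDerivAt_id v).add_const q).log hpos.ne'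
  have hcont : ContinuousOn (fun v ↦ 1 / (v + q)) (uIcc 0 Q) := by
    rw [uIcc_of_le hQ]
    refine continuousOn_const.div (by fun_prop) fun v hv ↦ ?_
    linarith [hv.1]
  rw [← ofReal_integral_eq_lintegral_ofReal
    ((intervalIntegrable_iff_integrableOn_Ioc_of_le hQ).1 hcont.intervalIntegrable),
    ← intervalIntegral.integral_of_le hQ,
    intervalIntegral.integral_eq_sub_of_hasDerivAt hderiv hcont.intervalIntegrable, zero_add,
    ← Real.log_div (by positivity) hq.ne', add_div, div_self hq.ne', add_comm]
  filter_upwards [self_mem_ae_restrict measurableSet_Ioc] with v hv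
  have := hv.1
  positivity

lemma lintegral_lintegral_indicator_inv_add (P : ℝ) {ε : ℝ} (hε : 0 < ε) (x₁ x₂ : ℝ) :
    ∫⁻ y₁, ∫⁻ y₂, (Iic (P ^ 2)).indicator (fun v ↦ ENNReal.ofReal (1 / (v + ε ^ 2)))
        ((y₁ - x₁) ^ 2 + (y₂ - x₂) ^ 2) =
      ENNReal.ofReal (π * log (1 + P ^ 2 / ε ^ 2)) := by
  rw [lintegral_lintegral_radial (Measurable.indicator (by fun_prop) measurableSet_Iic),
    setLIntegral_indicator measurableSet_Iic, inter_comm, Ioi_inter_Iic,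
    setLIntegral_Ioc_inv_add (sq_nonneg P) (by positivity), ENNReal.ofReal_mul pi_pos.le]

lemma setLIntegral_centeredBox_inv_le {P ε x₁ x₂ : ℝ} (hm : 0 ≤ m) (hε : 0 < ε)
    (hP : ∀ y ∈ centeredBox M m, (y.1 - x₁) ^ 2 + (y.2.1 - x₂) ^ 2 ≤ P ^ 2) :
    ∫⁻ y in centeredBox M m,
        ENNReal.ofReal (1 / ((y.1 - x₁) ^ 2 + (y.2.1 - x₂) ^ 2 + ε ^ 2)) ∂ρG ≤
      ENNReal.ofReal (2 * m * (π * log (1 + P ^ 2 / ε ^ 2))) := by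
  set φ : ℝ → ℝ≥0∞ := (Iic (P ^ 2)).indicator fun v ↦ ENNReal.ofReal (1 / (v + ε ^ 2)) with hφ
  have hφm : Measurable φ := Measurable.indicator (by fun_prop) measurableSet_Iic
  calc ∫⁻ y in centeredBox M m,
        ENNReal.ofReal (1 / ((y.1 - x₁) ^ 2 + (y.2.1 - x₂) ^ 2 + ε ^ 2)) ∂ρG
      = ∫⁻ y in centeredBox M m, φ ((y.1 - x₁) ^ 2 + (y.2.1 - x₂) ^ 2) ∂ρG := by
        refine setLIntegral_congr_fun (measurableSet_centeredBox M m) fun y hy ↦ ?_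
        rw [hφ, indicator_of_mem (mem_Iic.2 (hP y hy))]
    _ = ∫⁻ _ in Icc (-m) m, ∫⁻ y₁ in Icc (-M) M, ∫⁻ y₂ in Icc (-M) M,
          φ ((y₁ - x₁) ^ 2 + (y₂ - x₂) ^ 2) := setLIntegral_centeredBox (by fun_prop)
    _ ≤ ∫⁻ _ in Icc (-m) m, ENNReal.ofReal (π * log (1 + P ^ 2 / ε ^ 2)) := by
        rw [← lintegral_lintegral_indicator_inv_add P hε x₁ x₂]
        exact lintegral_mono fun _ ↦ (setLIntegral_le_lintegral _ _).trans
          (lintegral_mono fun _ ↦ setLIntegral_le_lintegral _ _)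
    _ = ENNReal.ofReal (2 * m * (π * log (1 + P ^ 2 / ε ^ 2))) := by
        rw [setLIntegral_const, Real.volume_Icc, mul_comm, sub_neg_eq_add, ← two_mul,
          ← ENNReal.ofReal_mul (by positivity)]

end centeredBox

/-! ### Atoms centered at the identity -/

/-- An atom supported in a Calderón–Zygmund set centered at the identity, of base `L` and
logarithmic height `2 * s`. Every atom is a normalized left translate of one of these. -/
structure IsCenteredAtom (A : G → ℝ) (L s : ℝ) : Prop where
  integrable : Integrable A ρG
  eq_zero : ∀ x ∉ centeredBox (L / 2) s, A x = 0
  eLpNorm_le : eLpNorm A ⊤ ρG ≤ (ρG (centeredBox (L / 2) s))⁻¹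
  integral_eq_zero : ∫ x, A x ∂ρG = 0
  base_pos : 0 < L
  height_pos : 0 < s
  base_of_lt_one : s < 1 → exp 2 * s ≤ L ∧ L < exp 8 * s
  base_of_one_le : 1 ≤ s → exp (2 * s) ≤ L ∧ L < exp (8 * s)

lemma abs_integral_le_of_lintegral_le {α : Type*} [MeasurableSpace α] {μ : Measure α} {f : α → ℝ}
    {C : ℝ} (hC : 0 ≤ C) (h : ∫⁻ y, ENNReal.ofReal |f y| ∂μ ≤ ENNReal.ofReal C) :
    |∫ y, f y ∂μ| ≤ C := by
  have hnorm := enorm_integral_le_lintegral_enorm (μ := μ) f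
  simp_rw [Real.enorm_eq_ofReal_abs] at hnorm
  exact (ENNReal.ofReal_le_ofReal_iff hC).1 (hnorm.trans h)

namespace IsCenteredAtom

variable {A : G → ℝ} {L s t : ℝ} {x : G}

lemma ρG_support (h : IsCenteredAtom A L s) :
    ρG (centeredBox (L / 2) s) = ENNReal.ofReal (2 * s * L ^ 2) := by
  rw [ρG_centeredBox (half_pos h.base_pos).le]
  congr 1
  ring

lemma volume_pos (h : IsCenteredAtom A L s) : 0 < 2 * s * L ^ 2 := by
  have hL := h.base_pos
  have hs := h.height_pos
  positivity

lemma ae_abs_le (h : IsCenteredAtom A L s) : ∀ᵐ y ∂ρG, |A y| ≤ 1 / (2 * s * L ^ 2) := by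
  have hbound := h.eLpNorm_le
  rw [h.ρG_support, ← ENNReal.ofReal_inv_of_pos h.volume_pos, eLpNorm_exponent_top] at hbound
  filter_upwards [ae_le_eLpNormEssSup (f := A) (μ := ρG)] with y hy
  have hy := hy.trans hbound
  rwa [Real.enorm_eq_ofReal_abs,
    ENNReal.ofReal_le_ofReal_iff (inv_nonneg.2 h.volume_pos.le), ← one_div] at hy

lemma lintegral_abs_mul_le (h : IsCenteredAtom A L s) (g : G → ℝ) :
    ∫⁻ y, ENNReal.ofReal |A y * g y| ∂ρG ≤ ENNReal.ofReal (1 / (2 * s * L ^ 2)) *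
      ∫⁻ y in centeredBox (L / 2) s, ENNReal.ofReal |g y| ∂ρG := by
  rw [← lintegral_const_mul' _ _ ENNReal.ofReal_ne_top,
    ← lintegral_indicator (measurableSet_centeredBox _ _)]
  refine lintegral_mono_ae ?_
  filter_upwards [h.ae_abs_le] with y hy
  by_cases hmem : y ∈ centeredBox (L / 2) s
  · rw [indicator_of_mem hmem, abs_mul, ENNReal.ofReal_mul (abs_nonneg _)]
    gcongr
  · simp [h.eq_zero y hmem]

lemma abs_convPoisson_le (h : IsCenteredAtom A L s) (hx : 0 < x.2.2) (ht : 0 < t) :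
    |convPoisson A t x| ≤ 1 / (2 * s * L ^ 2) := by
  have hbound : 0 ≤ 1 / (2 * s * L ^ 2) := one_div_nonneg.2 h.volume_pos.le
  have hmeas : Measurable fun y ↦ gMul x (gInv y) := by fun_prop
  have hmap : ∀ᵐ z ∂(Measure.map (fun y ↦ gMul x (gInv y)) ρG), |A z| ≤ 1 / (2 * s * L ^ 2) := by
    rw [map_gMul_gInv hx]
    exact (withDensity_absolutelyContinuous _ _).ae_le h.ae_abs_le
  have hae : ∀ᵐ y ∂ρG, |A (gMul x (gInv y))| ≤ 1 / (2 * s * L ^ 2) :=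
    ae_of_ae_map hmeas.aemeasurable hmap
  refine abs_integral_le_of_lintegral_le hbound ?_
  calc ∫⁻ y, ENNReal.ofReal |A (gMul x (gInv y)) * poissonK t y| ∂ρG
      ≤ ∫⁻ y, ENNReal.ofReal (1 / (2 * s * L ^ 2)) * ENNReal.ofReal (poissonK t y) ∂ρG := by
        refine lintegral_mono_ae ?_
        filter_upwards [hae, ae_pos_ρG] with y hy hypos
        have hK : 0 ≤ poissonK t y := convKernel_gE t y ▸ convKernel_nonneg hypos gE_pos ht
        rw [abs_mul, ENNReal.ofReal_mul (abs_nonneg _), abs_of_nonneg hK]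
        gcongr
    _ = ENNReal.ofReal (1 / (2 * s * L ^ 2)) := by
        rw [lintegral_const_mul' _ _ ENNReal.ofReal_ne_top, lintegral_poissonK ht, mul_one]

lemma abs_convPoisson_le_of_oscillation_le (h : IsCenteredAtom A L s) (hx : 0 < x.2.2)
    (ht : 0 < t) {E : ℝ} (hE₀ : 0 ≤ E)
    (hE : ∀ y ∈ centeredBox (L / 2) s, |convKernel t x y - convKernel t x gE| ≤ E) :
    |convPoisson A t x| ≤ E := by
  have hvol := h.volume_pos
  have hcancel :
      convPoisson A t x = ∫ y, A y * (convKernel t x y - convKernel t x gE) ∂ρG := by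
    simp_rw [mul_sub]
    rw [convPoisson_eq_integral_convKernel h.integrable.aestronglyMeasurable hx,
      integral_sub (integrable_mul_convKernel h.integrable hx ht) (h.integrable.mul_const _),
      integral_mul_const, h.integral_eq_zero, zero_mul, sub_zero]
  rw [hcancel]
  refine abs_integral_le_of_lintegral_le hE₀ ((h.lintegral_abs_mul_le _).trans ?_)
  calc ENNReal.ofReal (1 / (2 * s * L ^ 2)) * ∫⁻ y in centeredBox (L / 2) s,
        ENNReal.ofReal |convKernel t x y - convKernel t x gE| ∂ρG
      ≤ ENNReal.ofReal (1 / (2 * s * L ^ 2)) *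
          ∫⁻ _ in centeredBox (L / 2) s, ENNReal.ofReal E ∂ρG := by
        gcongr 1
        exact setLIntegral_mono measurable_const fun _ hy ↦ ENNReal.ofReal_le_ofReal (hE _ hy)
    _ = ENNReal.ofReal E := by
        rw [setLIntegral_const, h.ρG_support, ← ENNReal.ofReal_mul hE₀,
          ← ENNReal.ofReal_mul (by positivity), mul_comm E, ← mul_assoc,
          one_div_mul_cancel hvol.ne', one_mul]

lemma abs_convPoisson_le_of_convKernel_le (h : IsCenteredAtom A L s) (hx : 0 < x.2.2)
    (ht : 0 < t) {K ε P : ℝ} (hK : 0 ≤ K) (hε : 0 < ε)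
    (hP : ∀ y ∈ centeredBox (L / 2) s, (y.1 - x.1) ^ 2 + (y.2.1 - x.2.1) ^ 2 ≤ P ^ 2)
    (hkernel : ∀ y ∈ centeredBox (L / 2) s, convKernel t x y ≤
      K * (1 / ((y.1 - x.1) ^ 2 + (y.2.1 - x.2.1) ^ 2 + ε ^ 2))) :
    |convPoisson A t x| ≤ K * π * log (1 + P ^ 2 / ε ^ 2) / L ^ 2 := by
  have hL := h.base_pos
  have hs := h.height_pos
  have hlog : 0 ≤ log (1 + P ^ 2 / ε ^ 2) :=
    Real.log_nonneg (le_add_of_nonneg_right (by positivity))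
  rw [convPoisson_eq_integral_convKernel h.integrable.aestronglyMeasurable hx]
  refine abs_integral_le_of_lintegral_le (by positivity) ((h.lintegral_abs_mul_le _).trans ?_)
  calc ENNReal.ofReal (1 / (2 * s * L ^ 2)) *
        ∫⁻ y in centeredBox (L / 2) s, ENNReal.ofReal |convKernel t x y| ∂ρG
      ≤ ENNReal.ofReal (1 / (2 * s * L ^ 2)) * ∫⁻ y in centeredBox (L / 2) s, ENNReal.ofReal K *
          ENNReal.ofReal (1 / ((y.1 - x.1) ^ 2 + (y.2.1 - x.2.1) ^ 2 + ε ^ 2)) ∂ρG := by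
        gcongr 1
        refine setLIntegral_mono (by fun_prop) fun y hy ↦ ?_
        rw [← ENNReal.ofReal_mul hK,
          abs_of_nonneg (convKernel_nonneg hx (pos_of_mem_centeredBox hy) ht)]
        exact ENNReal.ofReal_le_ofReal (hkernel y hy)
    _ ≤ ENNReal.ofReal (1 / (2 * s * L ^ 2)) *
          (ENNReal.ofReal K * ENNReal.ofReal (2 * s * (π * log (1 + P ^ 2 / ε ^ 2)))) := by
        rw [lintegral_const_mul' _ _ ENNReal.ofReal_ne_top]
        gcongr 2
        exact setLIntegral_centeredBox_inv_le hs.le hε hP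
    _ = ENNReal.ofReal (K * π * log (1 + P ^ 2 / ε ^ 2) / L ^ 2) := by
        rw [← ENNReal.ofReal_mul hK, ← ENNReal.ofReal_mul (by positivity)]
        congr 1
        field_simp

end IsCenteredAtom

/-- `f` has a time-independent majorant of its Poisson extension whose integral is at most `C`.
The majorant is integrable, hence measurable, so that majorants can be summed without knowing that
`maxPoisson` is measurable. -/
def HasMaximalMajorant (C : ℝ) (f : G → ℝ) : Prop :=
  ∃ F : G → ℝ, Integrable F ρG ∧ (∀ x, 0 < x.2.2 → ∀ t > 0, |convPoisson f t x| ≤ F x) ∧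
    ∫ x, F x ∂ρG ≤ C

lemma HasMaximalMajorant.mono {C C' : ℝ} {f : G → ℝ} (h : HasMaximalMajorant C f) (hC : C ≤ C') :
    HasMaximalMajorant C' f :=
  let ⟨F, hF, hle, hint⟩ := h
  ⟨F, hF, hle, hint.trans hC⟩

/-! ### Oscillation in terms of the profiles -/

section Profiles

variable {x : G}

lemma abs_log_le_rG (hx : 0 < x.2.2) : |log x.2.2| ≤ rG x := by
  have h := abs_log_sub_log_le_dG gE_pos hx
  rwa [dG_gE_left, abs_sub_comm, gE, Real.log_one, sub_zero] at h

lemma one_le_mirrorDist_gE (hx : 0 < x.2.2) : 1 ≤ mirrorDist gE x :=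
  (le_add_of_nonneg_right hx.le).trans (add_le_mirrorDist gE x)

lemma mirrorDist_gE_le (x : G) : mirrorDist gE x ≤ eucDist gE x + 2 := by
  have hn := eucDist_nonneg gE x
  have hsq := sq_eucDist gE x
  have hx : x.2.2 - 1 ≤ eucDist gE x := by
    refine (abs_le_of_sq_le_sq' ?_ hn).2
    rw [hsq, gE]
    nlinarith [sq_nonneg (0 - x.1), sq_nonneg (0 - x.2.1)]
  refine (abs_le_of_sq_le_sq' ?_ (by linarith)).2
  have hmirror := sq_mirrorDist_sub_sq_eucDist gE x
  simp only [gE] at hmirror hx hn ⊢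
  linarith

lemma tailProfile_of_lt (hx : 0 < x.2.2) {η : ℝ} (hη : η < rG x) :
    tailProfile η x = 2 / (eucDist gE x * mirrorDist gE x * rG x ^ 3) := by
  have hsinh := sinh_dG gE_pos hx
  rw [dG_gE_left] at hsinh
  rw [tailProfile, if_pos hη, hsinh, sqrt_deltaG hx]
  simp only [gE]
  field_simp

lemma div_le_boundaryProfile (hx : 0 < x.2.2) {M : ℝ} (hM : 0 < M)
    (hxM : x.1 ^ 2 + x.2.1 ^ 2 + M ^ 2 ≤ 2 * eucDist gE x ^ 2) (hr : 1 ≤ rG x) :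
    M / (eucDist gE x ^ 2 * mirrorDist gE x * rG x ^ 2) ≤ 6 * boundaryProfile M x := by
  set S := √(x.1 ^ 2 + x.2.1 ^ 2 + M ^ 2) with hS
  have hSsq : S ^ 2 = x.1 ^ 2 + x.2.1 ^ 2 + M ^ 2 := Real.sq_sqrt (by positivity)
  have hSpos : 0 < S := Real.sqrt_pos.2 (by positivity)
  have hp₀ := mirrorDist_nonneg gE x
  have hn : S ^ 2 / 2 ≤ eucDist gE x ^ 2 := by linarith
  have hp : 2 * S / 3 ≤ mirrorDist gE x := by
    have hnp : eucDist gE x ^ 2 ≤ mirrorDist gE x ^ 2 :=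
      pow_le_pow_left₀ (eucDist_nonneg _ _) (eucDist_lt_mirrorDist gE_pos hx).le 2
    exact (abs_le_of_sq_le_sq' (by linarith [sq_nonneg S]) hp₀).2
  have hlog : (log x.2.2 ^ 2 + 1) / 2 ≤ rG x ^ 2 := by
    have h := pow_le_pow_left₀ (abs_nonneg _) (abs_log_le_rG hx) 2
    rw [sq_abs] at h
    nlinarith
  calc M / (eucDist gE x ^ 2 * mirrorDist gE x * rG x ^ 2)
      ≤ M / (S ^ 2 / 2 * (2 * S / 3) * ((log x.2.2 ^ 2 + 1) / 2)) := by gcongr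
    _ = 6 * boundaryProfile M x := by
        rw [boundaryProfile, ← hS]
        field_simp
        norm_num

end Profiles

/-! ### Small atoms -/

lemma mem_centeredBox_of_eucDist_le {x : G} {w : ℝ} (hw : w ≤ 1 / 2) (hx : eucDist gE x ≤ w) :
    x ∈ centeredBox w (2 * w) := by
  have hw₀ : 0 ≤ w := (eucDist_nonneg _ _).trans hx
  have hsq : x.1 ^ 2 + x.2.1 ^ 2 + (x.2.2 - 1) ^ 2 ≤ w ^ 2 := by
    have h := pow_le_pow_left₀ (eucDist_nonneg _ _) hx 2
    rw [sq_eucDist] at h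
    simp only [gE] at h
    linarith
  have h₁ : |x.1| ≤ w := abs_le_of_sq_le_sq (by nlinarith) hw₀
  have h₂ : |x.2.1| ≤ w := abs_le_of_sq_le_sq (by nlinarith) hw₀
  obtain ⟨hlower, hupper⟩ : -w ≤ x.2.2 - 1 ∧ x.2.2 - 1 ≤ w :=
    abs_le_of_sq_le_sq' (by nlinarith) hw₀
  have hexp := Real.add_one_le_exp (2 * w)
  have hexp_neg : exp (-(2 * w)) ≤ 1 - w := by
    rw [Real.exp_neg, inv_le_comm₀ (exp_pos _) (by linarith)]
    refine le_trans ?_ hexp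
    rw [inv_le_iff_one_le_mul₀ (by linarith)]
    nlinarith
  exact ⟨abs_le.1 h₁, abs_le.1 h₂, by linarith, by linarith⟩

lemma one_div_le_tailProfile_add_boundaryProfile {x : G} (hx : 0 < x.2.2) {η : ℝ} (hη₀ : 0 ≤ η)
    (hη : η < rG x) (hn : 0 < eucDist gE x) :
    1 / (eucDist gE x ^ 2 * mirrorDist gE x * rG x ^ 2) ≤
      tailProfile η x + 6 * boundaryProfile 1 x := by
  have hr : 0 < rG x := hη₀.trans_lt hη
  have hp := mirrorDist_pos gE_pos hx
  rcases le_or_gt (1 / 4) x.2.2 with hquarter | hquarter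
  · have hrn : rG x / 2 ≤ eucDist gE x := by
      have h := mul_sq_dG_le gE_pos hx
      rw [dG_gE_left] at h
      simp only [gE, one_mul] at h
      exact (abs_le_of_sq_le_sq' (by simp only [gE]; nlinarith [sq_nonneg (rG x)]) hn.le).2
    calc 1 / (eucDist gE x ^ 2 * mirrorDist gE x * rG x ^ 2)
        ≤ 1 / (eucDist gE x * (rG x / 2) * mirrorDist gE x * rG x ^ 2) := by
          rw [sq (eucDist gE x)]
          gcongr
      _ = tailProfile η x := by
          rw [tailProfile_of_lt hx hη]
          field_simp
      _ ≤ tailProfile η x + 6 * boundaryProfile 1 x :=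
          le_add_of_nonneg_right
            (mul_nonneg (by norm_num) (boundaryProfile_nonneg zero_le_one x))
  · have hlog : 1 ≤ |log x.2.2| := by
      have h : log x.2.2 ≤ -1 := by
        rw [Real.log_le_iff_le_exp hx, Real.exp_neg]
        refine hquarter.le.trans ?_
        rw [one_div]
        exact inv_anti₀ (exp_pos _) (by linarith [Real.exp_one_lt_d9])
      exact le_abs.2 (Or.inr (by linarith))
    have hxM : x.1 ^ 2 + x.2.1 ^ 2 + 1 ^ 2 ≤ 2 * eucDist gE x ^ 2 := by
      rw [sq_eucDist, gE]
      nlinarith [sq_nonneg x.1, sq_nonneg x.2.1]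
    exact (div_le_boundaryProfile hx one_pos hxM (hlog.trans (abs_log_le_rG hx))).trans
      (le_add_of_nonneg_left (tailProfile_nonneg hη₀ x))

namespace IsCenteredAtom

variable {A : G → ℝ} {L s t : ℝ} {x : G}

lemma base_le_of_lt_one (h : IsCenteredAtom A L s) (hs : s < 1) : L ≤ 2990 * s := by
  have hexp : exp 8 < 2990 := by
    rw [show (8 : ℝ) = (8 : ℕ) * 1 by norm_num, Real.exp_nat_mul]
    calc exp 1 ^ 8 < 2.7182818286 ^ 8 :=
          pow_lt_pow_left₀ Real.exp_one_lt_d9 (exp_pos _).le (by norm_num)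
      _ < 2990 := by norm_num
  exact (h.base_of_lt_one hs).2.le.trans (mul_le_mul_of_nonneg_right hexp.le h.height_pos.le)

lemma height_le_base_of_lt_one (h : IsCenteredAtom A L s) (hs : s < 1) : s ≤ L :=
  (le_mul_of_one_le_left h.height_pos.le (Real.one_le_exp zero_le_two)).trans
    (h.base_of_lt_one hs).1

lemma abs_convPoisson_le_of_small_of_far (h : IsCenteredAtom A L s) (hs : s < 1 / 10 ^ 6)
    (hx : 0 < x.2.2) (hfar : 2 * 10 ^ 5 * s ≤ eucDist gE x) (ht : 0 < t) :
    |convPoisson A t x| ≤ 10 ^ 7 * s * (tailProfile s x + boundaryProfile 1 x) := by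
  have hs₀ := h.height_pos
  have hL := h.base_le_of_lt_one (by linarith)
  have hn : 0 < eucDist gE x := lt_of_lt_of_le (by positivity) hfar
  have hp := one_le_mirrorDist_gE hx
  have hr : 66000 * s ≤ rG x := by
    refine le_trans ?_ (dG_gE_left x ▸ eucDist_div_mirrorDist_le_dG gE_pos hx)
    rw [le_div_iff₀ (by linarith)]
    rcases le_total (eucDist gE x) 1 with _ | _ <;> nlinarith [mirrorDist_gE_le x]
  have hΔ : 8 * (3000 * s) / mirrorDist gE x ≤ 24000 * s :=
    (div_le_self (by positivity) hp).trans (by linarith)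
  have hsr : s < rG x := by linarith
  have htail := tailProfile_of_lt hx hsr
  have hprofiles := one_div_le_tailProfile_add_boundaryProfile hx hs₀.le hsr hn
  have hboundary := boundaryProfile_nonneg zero_le_one x
  have htail₀ := tailProfile_nonneg hs₀.le x
  refine h.abs_convPoisson_le_of_oscillation_le hx ht (by positivity) fun y hy ↦ ?_
  calc |convKernel t x y - convKernel t x gE|
      ≤ 6 * (3000 * s) / (eucDist gE x ^ 2 * mirrorDist gE x * rG x ^ 2) +
          192 * (8 * (3000 * s) / mirrorDist gE x + s) /
            (eucDist gE x * mirrorDist gE x * rG x ^ 3) :=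
        abs_convKernel_sub_convKernel_gE_le hx (pos_of_mem_centeredBox hy) ht hn
          ((coord_le_of_mem_centeredBox (by linarith) hy).trans (by linarith)) (by linarith)
          (abs_log_le_of_mem_centeredBox hy) (by linarith)
    _ = 18000 * s * (1 / (eucDist gE x ^ 2 * mirrorDist gE x * rG x ^ 2)) +
          96 * (8 * (3000 * s) / mirrorDist gE x + s) * tailProfile s x := by
        rw [htail]
        ring
    _ ≤ 18000 * s * (tailProfile s x + 6 * boundaryProfile 1 x) +
          96 * (24000 * s + s) * tailProfile s x := by gcongr
    _ ≤ 10 ^ 7 * s * (tailProfile s x + boundaryProfile 1 x) := by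
        nlinarith [mul_nonneg hs₀.le htail₀, mul_nonneg hs₀.le hboundary]

lemma abs_convPoisson_le_of_lt_one (h : IsCenteredAtom A L s) (hs : s < 1) (hx : 0 < x.2.2)
    (ht : 0 < t) : |convPoisson A t x| ≤ 1 / s ^ 3 := by
  have hs₀ := h.height_pos
  refine (h.abs_convPoisson_le hx ht).trans (one_div_le_one_div_of_le (by positivity) ?_)
  nlinarith [pow_le_pow_left₀ hs₀.le (h.height_le_base_of_lt_one hs) 2]

end IsCenteredAtom

lemma hasMaximalMajorant_of_small {A : G → ℝ} {L s : ℝ} (h : IsCenteredAtom A L s)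
    (hs : s < 1 / 10 ^ 6) :
    HasMaximalMajorant (10 ^ 18) A := by
  have hs₀ := h.height_pos
  set w := 2 * 10 ^ 5 * s with hw
  have hw₀ : 0 ≤ w := by positivity
  obtain ⟨htail, htail_eq⟩ := integral_tailProfile hs₀
  obtain ⟨hboundary, hboundary_eq⟩ := integral_boundaryProfile one_pos
  have hbox : Integrable ((centeredBox w (2 * w)).indicator fun _ ↦ 1 / s ^ 3) ρG :=
    (integrable_indicator_iff (measurableSet_centeredBox _ _)).2
      (integrableOn_const (ρG_centeredBox hw₀ _ ▸ ENNReal.ofReal_ne_top))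
  have hprofiles : Integrable (fun x ↦ 10 ^ 7 * s * (tailProfile s x + boundaryProfile 1 x)) ρG :=
    (htail.add hboundary).const_mul _
  refine ⟨_, hbox.add hprofiles, fun x hx t ht ↦ ?_, ?_⟩
  · rw [Pi.add_apply]
    have hprofiles₀ : 0 ≤ 10 ^ 7 * s * (tailProfile s x + boundaryProfile 1 x) :=
      mul_nonneg (by positivity)
        (add_nonneg (tailProfile_nonneg hs₀.le x) (boundaryProfile_nonneg zero_le_one x))
    rcases le_total (eucDist gE x) w with hnear | hfar
    · rw [indicator_of_mem (mem_centeredBox_of_eucDist_le (by rw [hw]; linarith) hnear)]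
      exact le_add_of_le_of_nonneg (h.abs_convPoisson_le_of_lt_one (by linarith) hx ht) hprofiles₀
    · exact le_add_of_nonneg_of_le (indicator_nonneg (fun _ _ ↦ by positivity) x)
        (h.abs_convPoisson_le_of_small_of_far hs hx hfar ht)
  · rw [integral_add' hbox hprofiles, integral_const_mul,
      integral_add htail hboundary, htail_eq, hboundary_eq,
      integral_indicator_const _ (measurableSet_centeredBox _ _), measureReal_def,
      ρG_centeredBox hw₀, ENNReal.toReal_ofReal (by positivity), smul_eq_mul]
    have hbox_eq : (2 * w) ^ 2 * (2 * (2 * w)) * (1 / s ^ 3) = 16 * (2 * 10 ^ 5) ^ 3 := by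
      rw [hw]
      field_simp
      norm_num
    have hprofiles_eq :
        10 ^ 7 * s * (4 * π / s + 2 * π ^ 2) = 10 ^ 7 * (4 * π + 2 * s * π ^ 2) := by
      field_simp
    rw [hbox_eq, hprofiles_eq]
    nlinarith [Real.pi_pos, Real.pi_lt_four]

/-! ### Large atoms -/

lemma convKernel_le_of_le_dG {x y : G} {d t : ℝ} (hx : 0 < x.2.2) (hy : 0 < y.2.2)
    (ht : 0 < t) (hd : 0 < d) (hdist : d ≤ dG y x) :
    convKernel t x y ≤ (2 + d) / d ^ 3 * (1 / mirrorDist y x ^ 2) := by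
  have hr : 0 < dG y x := hd.trans_le hdist
  have hp := mirrorDist_pos hy hx
  have hn : d / (2 + d) * mirrorDist y x ≤ eucDist y x := by
    have h := dG_mul_mirrorDist_le hy hx
    have hratio : d / (2 + d) ≤ dG y x / (2 + dG y x) := by
      rw [div_le_div_iff₀ (by positivity) (by positivity)]
      nlinarith
    calc d / (2 + d) * mirrorDist y x ≤ dG y x / (2 + dG y x) * mirrorDist y x := by gcongr
      _ ≤ eucDist y x := by
        rw [div_mul_eq_mul_div, div_le_iff₀ (by positivity)]
        linarith
  have hn₀ : 0 < eucDist y x := lt_of_lt_of_le (by positivity) hn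
  calc convKernel t x y ≤ 1 / (mirrorDist y x * eucDist y x * dG y x ^ 2) :=
        convKernel_le hx hy hn₀ ht
    _ ≤ 1 / (mirrorDist y x * (d / (2 + d) * mirrorDist y x) * d ^ 2) := by gcongr
    _ = (2 + d) / d ^ 3 * (1 / mirrorDist y x ^ 2) := by field_simp

lemma convKernel_le_of_mem_centeredBox {x y : G} {M s t : ℝ} (hs : 1 / 10 ^ 6 ≤ s)
    (hx : 0 < x.2.2) (hlog : 2 * s < |log x.2.2|) (hy : y ∈ centeredBox M s) (ht : 0 < t) :
    convKernel t x y ≤ 12 * 10 ^ 6 / log x.2.2 ^ 2 *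
      (1 / ((y.1 - x.1) ^ 2 + (y.2.1 - x.2.1) ^ 2 + exp (-s) ^ 2)) := by
  have hypos := pos_of_mem_centeredBox hy
  have hlog₀ : 0 < |log x.2.2| := by linarith
  have hd : 0 < |log x.2.2| / 2 := half_pos hlog₀
  have hdist : |log x.2.2| / 2 ≤ dG y x := by
    have hlip := abs_log_sub_log_le_dG hypos hx
    rw [abs_sub_comm] at hlip
    linarith [abs_sub_abs_le_abs_sub (log x.2.2) (log y.2.2), abs_log_le_of_mem_centeredBox hy]
  have hconst : (2 + |log x.2.2| / 2) / (|log x.2.2| / 2) ^ 3 ≤ 12 * 10 ^ 6 / log x.2.2 ^ 2 := by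
    rw [← sq_abs, div_le_div_iff₀ (by positivity) (by positivity)]
    nlinarith [sq_nonneg |log x.2.2|, pow_pos hd 2]
  have hmirror : (y.1 - x.1) ^ 2 + (y.2.1 - x.2.1) ^ 2 + exp (-s) ^ 2 ≤ mirrorDist y x ^ 2 := by
    rw [sq_mirrorDist]
    gcongr
    exact hy.2.2.1.trans (le_add_of_nonneg_right hx.le)
  refine (convKernel_le_of_le_dG hx hypos ht hd hdist).trans ?_
  gcongr

namespace IsCenteredAtom

variable {A : G → ℝ} {L s t : ℝ} {x : G}

lemma exp_two_mul_height_le (h : IsCenteredAtom A L s) (hs : 1 / 10 ^ 6 ≤ s) :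
    exp (2 * s) ≤ 10 ^ 6 * L := by
  have hL := h.base_pos
  rcases lt_or_ge s 1 with hs₁ | hs₁
  · have hexp : exp (2 * s) ≤ exp 2 := Real.exp_le_exp.2 (by linarith)
    nlinarith [(h.base_of_lt_one hs₁).1, exp_pos 2]
  · linarith [(h.base_of_one_le hs₁).1]

lemma base_le_exp (h : IsCenteredAtom A L s) : L ≤ exp (8 + 8 * s) := by
  have hs₀ := h.height_pos
  rw [Real.exp_add]
  rcases lt_or_ge s 1 with hs₁ | hs₁
  · have hexp : s ≤ exp (8 * s) := by linarith [Real.add_one_le_exp (8 * s)]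
    exact (h.base_of_lt_one hs₁).2.le.trans (by gcongr)
  · exact (h.base_of_one_le hs₁).2.le.trans
      (le_mul_of_one_le_left (exp_pos _).le (Real.one_le_exp (by norm_num)))

lemma four_add_le_rG_of_large_of_far (h : IsCenteredAtom A L s) (hs : 1 / 10 ^ 6 ≤ s)
    (hx : 0 < x.2.2) (hfar : (10 ^ 8 * L) ^ 2 ≤ x.1 ^ 2 + x.2.1 ^ 2) : 4 + 2 * s ≤ rG x := by
  have hexp_four : exp 4 ≤ 100 := by
    rw [show (4 : ℝ) = (4 : ℕ) * 1 by norm_num, Real.exp_nat_mul]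
    calc exp 1 ^ 4 ≤ 3 ^ 4 :=
          pow_le_pow_left₀ (exp_pos _).le (by linarith [Real.exp_one_lt_d9]) _
      _ ≤ 100 := by norm_num
  rw [← Real.exp_le_exp]
  calc exp (4 + 2 * s) = exp 4 * exp (2 * s) := Real.exp_add _ _
    _ ≤ 100 * (10 ^ 6 * L) := by
        gcongr
        exact h.exp_two_mul_height_le hs
    _ = 10 ^ 8 * L := by ring
    _ ≤ normG x := Real.le_sqrt_of_sq_le hfar
    _ ≤ exp (rG x) := normG_le_exp_rG hx

lemma abs_convPoisson_le_of_large_of_far (h : IsCenteredAtom A L s) (hs : 1 / 10 ^ 6 ≤ s)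
    (hx : 0 < x.2.2) (hfar : (10 ^ 8 * L) ^ 2 ≤ x.1 ^ 2 + x.2.1 ^ 2) (ht : 0 < t) :
    |convPoisson A t x| ≤ 10 ^ 8 * (s * tailProfile s x + boundaryProfile L x) := by
  have hL := h.base_pos
  have hs₀ := h.height_pos
  have hr := h.four_add_le_rG_of_large_of_far hs hx hfar
  have hbase : x.1 ^ 2 + x.2.1 ^ 2 ≤ eucDist gE x ^ 2 := by
    rw [sq_eucDist, gE]
    nlinarith [sq_nonneg (1 - x.2.2)]
  have hn : 10 ^ 8 * L ≤ eucDist gE x :=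
    (abs_le_of_sq_le_sq' (hfar.trans hbase) (eucDist_nonneg _ _)).2
  have hn₀ : 0 < eucDist gE x := lt_of_lt_of_le (by positivity) hn
  have hnp := eucDist_lt_mirrorDist gE_pos hx
  have hΔ : 8 * (2 * 10 ^ 6 * L) / mirrorDist gE x ≤ 1 := by
    rw [div_le_one (hn₀.trans hnp)]
    linarith
  have hboundary := div_le_boundaryProfile hx hL (by nlinarith) (by linarith)
  have hboundary₀ := boundaryProfile_nonneg hL.le x
  have htail₀ := tailProfile_nonneg hs₀.le x
  refine h.abs_convPoisson_le_of_oscillation_le hx ht (by positivity) fun y hy ↦ ?_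
  have hexp : exp s ≤ exp (2 * s) := Real.exp_le_exp.2 (by linarith)
  have hy₁ : |y.1| + |y.2.1| + |y.2.2 - 1| ≤ 2 * 10 ^ 6 * L := by
    linarith [coord_le_exp_of_mem_centeredBox hy, h.exp_two_mul_height_le hs]
  calc |convKernel t x y - convKernel t x gE|
      ≤ 6 * (2 * 10 ^ 6 * L) / (eucDist gE x ^ 2 * mirrorDist gE x * rG x ^ 2) +
          192 * (8 * (2 * 10 ^ 6 * L) / mirrorDist gE x + s) /
            (eucDist gE x * mirrorDist gE x * rG x ^ 3) :=
        abs_convKernel_sub_convKernel_gE_le hx (pos_of_mem_centeredBox hy) ht hn₀ hy₁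
          (by linarith) (abs_log_le_of_mem_centeredBox hy) (by linarith)
    _ = 12 * 10 ^ 6 * (L / (eucDist gE x ^ 2 * mirrorDist gE x * rG x ^ 2)) +
          96 * (8 * (2 * 10 ^ 6 * L) / mirrorDist gE x + s) * tailProfile s x := by
        rw [tailProfile_of_lt hx (show s < rG x by linarith)]
        ring
    _ ≤ 12 * 10 ^ 6 * (6 * boundaryProfile L x) + 96 * (10 ^ 6 * s + s) * tailProfile s x := by
        gcongr
        linarith
    _ ≤ 10 ^ 8 * (s * tailProfile s x + boundaryProfile L x) := by
        nlinarith [mul_nonneg hs₀.le htail₀]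

lemma log_one_add_sq_div_sq_le (h : IsCenteredAtom A L s) (hs : 1 / 10 ^ 6 ≤ s) :
    log (1 + (2 * 10 ^ 8 * L) ^ 2 / exp (-s) ^ 2) ≤ 10 ^ 8 * s := by
  have hs₀ := h.height_pos
  have hL := h.base_pos
  have hexp_forty : 10 ^ 17 ≤ exp 40 := by
    rw [show (40 : ℝ) = (40 : ℕ) * 1 by norm_num, Real.exp_nat_mul]
    calc (10 : ℝ) ^ 17 ≤ 2.7182818283 ^ 40 := by norm_num
      _ ≤ exp 1 ^ 40 := pow_le_pow_left₀ (by norm_num) Real.exp_one_gt_d9.le _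
  have hone : 1 ≤ exp (16 + 18 * s) := Real.one_le_exp (by positivity)
  have hratio : L ^ 2 / exp (-s) ^ 2 ≤ exp (16 + 18 * s) := by
    calc L ^ 2 / exp (-s) ^ 2 ≤ exp (8 + 8 * s) ^ 2 / exp (-s) ^ 2 := by
          gcongr
          exact h.base_le_exp
      _ = exp (16 + 18 * s) := by
          rw [← Real.exp_nat_mul, ← Real.exp_nat_mul, ← Real.exp_sub]
          congr 1
          push_cast
          ring
  refine (Real.log_le_iff_le_exp (by positivity)).2 ?_
  calc 1 + (2 * 10 ^ 8 * L) ^ 2 / exp (-s) ^ 2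
      = 1 + 4 * 10 ^ 16 * (L ^ 2 / exp (-s) ^ 2) := by ring
    _ ≤ 10 ^ 17 * exp (16 + 18 * s) := by nlinarith
    _ ≤ exp 40 * exp (16 + 18 * s) := by gcongr
    _ = exp (40 + (16 + 18 * s)) := (Real.exp_add _ _).symm
    _ ≤ exp (10 ^ 8 * s) := Real.exp_le_exp.2 (by linarith)

lemma abs_convPoisson_le_of_abs_log_le (h : IsCenteredAtom A L s) (hx : 0 < x.2.2)
    (hlog : |log x.2.2| ≤ 2 * s) (ht : 0 < t) :
    |convPoisson A t x| ≤ 10 * s / L ^ 2 * (1 / (log x.2.2 ^ 2 + s ^ 2)) := by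
  have hL := h.base_pos
  have hs₀ := h.height_pos
  have hsq : log x.2.2 ^ 2 ≤ 4 * s ^ 2 := by
    rw [← sq_abs]
    nlinarith [abs_nonneg (log x.2.2)]
  calc |convPoisson A t x| ≤ 1 / (2 * s * L ^ 2) := h.abs_convPoisson_le hx ht
    _ = 10 * s / L ^ 2 * (1 / (20 * s ^ 2)) := by
      field_simp
      norm_num
    _ ≤ 10 * s / L ^ 2 * (1 / (log x.2.2 ^ 2 + s ^ 2)) := by
      gcongr
      nlinarith

lemma abs_convPoisson_le_of_lt_abs_log (h : IsCenteredAtom A L s) (hs : 1 / 10 ^ 6 ≤ s)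
    (hx : 0 < x.2.2) (hnear : x.1 ^ 2 + x.2.1 ^ 2 ≤ (10 ^ 8 * L) ^ 2)
    (hlog : 2 * s < |log x.2.2|) (ht : 0 < t) :
    |convPoisson A t x| ≤ 10 ^ 16 * s / L ^ 2 * (1 / (log x.2.2 ^ 2 + s ^ 2)) := by
  have hL := h.base_pos
  have := h.height_pos
  have hsq : 4 * s ^ 2 ≤ log x.2.2 ^ 2 := by
    rw [← sq_abs (log x.2.2)]
    nlinarith
  have hlog₀ : 0 < log x.2.2 ^ 2 := lt_of_lt_of_le (by positivity) hsq
  have hP : ∀ y ∈ centeredBox (L / 2) s,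
      (y.1 - x.1) ^ 2 + (y.2.1 - x.2.1) ^ 2 ≤ (2 * 10 ^ 8 * L) ^ 2 := fun y hy ↦ by
    have hy₁ : y.1 ^ 2 ≤ (L / 2) ^ 2 := sq_le_sq' hy.1.1 hy.1.2
    have hy₂ : y.2.1 ^ 2 ≤ (L / 2) ^ 2 := sq_le_sq' hy.2.1.1 hy.2.1.2
    nlinarith [sq_nonneg (y.1 + x.1), sq_nonneg (y.2.1 + x.2.1)]
  calc |convPoisson A t x|
      ≤ 12 * 10 ^ 6 / log x.2.2 ^ 2 * π *
          log (1 + (2 * 10 ^ 8 * L) ^ 2 / exp (-s) ^ 2) / L ^ 2 :=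
        h.abs_convPoisson_le_of_convKernel_le hx ht (by positivity) (exp_pos _) hP
          fun y hy ↦ convKernel_le_of_mem_centeredBox hs hx hlog hy ht
    _ ≤ 12 * 10 ^ 6 / log x.2.2 ^ 2 * 4 * (10 ^ 8 * s) / L ^ 2 := by
        gcongr
        · exact Real.log_nonneg (le_add_of_nonneg_right (by positivity))
        · exact Real.pi_lt_four.le
        · exact h.log_one_add_sq_div_sq_le hs
    _ = 96 * 10 ^ 14 * s / L ^ 2 * (1 / (2 * log x.2.2 ^ 2)) := by
        field_simp
        norm_num
    _ ≤ 10 ^ 16 * s / L ^ 2 * (1 / (log x.2.2 ^ 2 + s ^ 2)) := by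
        gcongr
        · norm_num
        · nlinarith

lemma abs_convPoisson_le_of_large_of_near (h : IsCenteredAtom A L s) (hs : 1 / 10 ^ 6 ≤ s)
    (hx : 0 < x.2.2) (hnear : x.1 ^ 2 + x.2.1 ^ 2 ≤ (10 ^ 8 * L) ^ 2) (ht : 0 < t) :
    |convPoisson A t x| ≤ 10 ^ 16 * s / L ^ 2 * slabProfile (10 ^ 8 * L) s x := by
  have := h.height_pos
  rw [slabProfile, if_pos hnear]
  rcases le_or_gt |log x.2.2| (2 * s) with hlog | hlog
  · refine (h.abs_convPoisson_le_of_abs_log_le hx hlog ht).trans ?_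
    gcongr
    norm_num
  · exact h.abs_convPoisson_le_of_lt_abs_log hs hx hnear hlog ht

end IsCenteredAtom

lemma hasMaximalMajorant_of_large {A : G → ℝ} {L s : ℝ} (h : IsCenteredAtom A L s)
    (hs : 1 / 10 ^ 6 ≤ s) : HasMaximalMajorant (10 ^ 34) A := by
  have hs₀ := h.height_pos
  have hL := h.base_pos
  obtain ⟨htail, htail_eq⟩ := integral_tailProfile hs₀
  obtain ⟨hboundary, hboundary_eq⟩ := integral_boundaryProfile hL
  obtain ⟨hslab, hslab_eq⟩ := integral_slabProfile (10 ^ 8 * L) hs₀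
  have hnear := hslab.const_mul (10 ^ 16 * s / L ^ 2)
  have hfar := ((htail.const_mul s).add hboundary).const_mul (10 ^ 8)
  refine ⟨_, hnear.add hfar, fun x hx t ht ↦ ?_, ?_⟩
  · have hslab₀ : 0 ≤ 10 ^ 16 * s / L ^ 2 * slabProfile (10 ^ 8 * L) s x :=
      mul_nonneg (by positivity) (slabProfile_nonneg _ _ x)
    have hfar₀ : 0 ≤ 10 ^ 8 * (s * tailProfile s x + boundaryProfile L x) :=
      mul_nonneg (by positivity) (add_nonneg (mul_nonneg hs₀.le (tailProfile_nonneg hs₀.le x))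
        (boundaryProfile_nonneg hL.le x))
    rw [Pi.add_apply]
    rcases le_total (x.1 ^ 2 + x.2.1 ^ 2) ((10 ^ 8 * L) ^ 2) with hx₁ | hx₁
    · exact le_add_of_le_of_nonneg (h.abs_convPoisson_le_of_large_of_near hs hx hx₁ ht) hfar₀
    · exact le_add_of_nonneg_of_le hslab₀ (h.abs_convPoisson_le_of_large_of_far hs hx hx₁ ht)
  · rw [integral_add' hnear hfar, integral_const_mul, integral_const_mul,
      integral_add' (htail.const_mul s) hboundary, integral_const_mul, htail_eq, hboundary_eq,
      hslab_eq]
    have hnear_eq : 10 ^ 16 * s / L ^ 2 * (π ^ 2 * (10 ^ 8 * L) ^ 2 / s) = 10 ^ 32 * π ^ 2 := by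
      field_simp
    have hfar_eq : s * (4 * π / s) = 4 * π := by field_simp
    rw [hnear_eq, hfar_eq]
    nlinarith [Real.pi_pos, Real.pi_lt_four]

lemma exists_hasMaximalMajorant_of_isCenteredAtom : ∃ C > 0, ∀ A L s, IsCenteredAtom A L s →
    HasMaximalMajorant C A := by
  refine ⟨10 ^ 34, by positivity, fun A L s h ↦ ?_⟩
  rcases lt_or_ge s (1 / 10 ^ 6) with hs | hs
  · exact (hasMaximalMajorant_of_small h hs).mono (by norm_num)
  · exact hasMaximalMajorant_of_large h hs

/-! ### Left translation -/

/-- The left translate of `f` by `c⁻¹`, normalized so as to keep its integral. Right convolution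
commutes with left translation, so this reduces atoms to centered atoms. -/
def normalizedTranslate (c : G) (f : G → ℝ) : G → ℝ := fun x ↦ c.2.2 ^ 2 * f (gMul c x)

section NormalizedTranslate

variable {c : G} {f : G → ℝ}

lemma sq_mul_deltaG (hc : 0 < c.2.2) : c.2.2 ^ 2 * deltaG c = 1 := by
  rw [deltaG]
  field_simp

lemma convPoisson_normalizedTranslate (c : G) (f : G → ℝ) (t : ℝ) (x : G) :
    convPoisson (normalizedTranslate c f) t x = c.2.2 ^ 2 * convPoisson f t (gMul c x) := by
  simp_rw [convPoisson, normalizedTranslate, mul_assoc, gMul_assoc]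
  exact integral_const_mul _ _

lemma integrable_normalizedTranslate (hc : 0 < c.2.2) (hf : Integrable f ρG) :
    Integrable (normalizedTranslate c f) ρG := by
  have hmap : Integrable f (Measure.map (gMul c) ρG) := by
    rw [map_gMul_left hc]
    exact hf.smul_measure ENNReal.ofReal_ne_top
  exact (hmap.comp_measurable (measurable_gMul_left c)).const_mul _

lemma integral_normalizedTranslate (hc : 0 < c.2.2) (hf : AEStronglyMeasurable f ρG) :
    ∫ x, normalizedTranslate c f x ∂ρG = ∫ x, f x ∂ρG := by
  simp only [normalizedTranslate]
  rw [integral_const_mul, integral_gMul_left hc hf, ← mul_assoc, sq_mul_deltaG hc, one_mul]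

lemma eLpNorm_top_normalizedTranslate_le (hc : 0 < c.2.2) (hf : AEStronglyMeasurable f ρG) :
    eLpNorm (normalizedTranslate c f) ⊤ ρG ≤ ENNReal.ofReal (c.2.2 ^ 2) * eLpNorm f ⊤ ρG := by
  have hmap := map_gMul_left hc
  calc eLpNorm (normalizedTranslate c f) ⊤ ρG
      = ENNReal.ofReal (c.2.2 ^ 2) * eLpNorm (f ∘ gMul c) ⊤ ρG := by
        rw [← Real.enorm_eq_ofReal (sq_nonneg _), ← eLpNorm_const_smul]
        rfl
    _ = ENNReal.ofReal (c.2.2 ^ 2) * eLpNorm f ⊤ (ENNReal.ofReal (deltaG c) • ρG) := by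
        rw [← hmap, eLpNorm_map_measure (hmap ▸ hf.smul_measure _)
          (measurable_gMul_left c).aemeasurable]
    _ ≤ ENNReal.ofReal (c.2.2 ^ 2) * eLpNorm f ⊤ ρG := by
        refine mul_le_mul' le_rfl ?_
        rw [eLpNorm_exponent_top, eLpNorm_exponent_top]
        exact eLpNormEssSup_mono_measure f Measure.smul_absolutelyContinuous

lemma HasMaximalMajorant.of_normalizedTranslate {C : ℝ} (hc : 0 < c.2.2)
    (h : HasMaximalMajorant C (normalizedTranslate c f)) : HasMaximalMajorant C f := by
  obtain ⟨F, hF, hle, hint⟩ := h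
  have hc' := gInv_pos hc
  refine ⟨normalizedTranslate (gInv c) F, integrable_normalizedTranslate hc' hF,
    fun x hx t ht ↦ ?_, ?_⟩
  · have hx' := hle _ (gMul_pos hc' hx) t ht
    rw [convPoisson_normalizedTranslate, gMul_gInv_cancel_left hc, abs_mul,
      abs_of_nonneg (sq_nonneg _)] at hx'
    calc |convPoisson f t x|
        = (gInv c).2.2 ^ 2 * (c.2.2 ^ 2 * |convPoisson f t x|) := by
          simp only [gInv]
          field_simp
      _ ≤ normalizedTranslate (gInv c) F x := mul_le_mul_of_nonneg_left hx' (sq_nonneg _)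
  · rwa [integral_normalizedTranslate hc' hF.aestronglyMeasurable]

end NormalizedTranslate

lemma preimage_gMul_left_box {c : G} (hc : 0 < c.2.2) (L r : ℝ) :
    gMul c ⁻¹' (Icc (c.1 - L / 2) (c.1 + L / 2) ×ˢ (Icc (c.2.1 - L / 2) (c.2.1 + L / 2) ×ˢ
      Icc (c.2.2 * exp (-r)) (c.2.2 * exp r))) = centeredBox (L / c.2.2 / 2) r := by
  ext x
  have hL : L / 2 = c.2.2 * (L / c.2.2 / 2) := by field_simp
  simp only [mem_preimage, gMul, centeredBox, mem_prod, mem_Icc]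
  rw [hL, sub_eq_add_neg, sub_eq_add_neg, ← mul_neg]
  simp only [add_le_add_iff_left, mul_le_mul_iff_right₀ hc]

lemma IsAtomG.exists_isCenteredAtom {A : G → ℝ} (h : IsAtomG A) :
    ∃ c : G, 0 < c.2.2 ∧ ∃ L s, IsCenteredAtom (normalizedTranslate c A) L s := by
  obtain ⟨hint, R, ⟨c, L, r, hc, hL, hr, rfl, hsmall, hlarge⟩, hzero, hsup, hmean⟩ := h
  have hpre := preimage_gMul_left_box hc L r
  have hmeas := hint.aestronglyMeasurable
  refine ⟨c, hc, L / c.2.2, r, integrable_normalizedTranslate hc hint, fun x hx ↦ ?_, ?_,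
    by rw [integral_normalizedTranslate hc hmeas, hmean], div_pos hL hc, hr, fun hr₁ ↦ ?_,
    fun hr₁ ↦ ?_⟩
  · rw [← hpre] at hx
    rw [normalizedTranslate, hzero _ hx, mul_zero]
  · refine (eLpNorm_top_normalizedTranslate_le hc hmeas).trans ?_
    rw [← hpre, ← Measure.map_apply (measurable_gMul_left c)
        (measurableSet_Icc.prod (measurableSet_Icc.prod measurableSet_Icc)),
      map_gMul_left hc, Measure.smul_apply, smul_eq_mul,
      ENNReal.mul_inv (Or.inl (by simpa using deltaG_pos hc)) (Or.inl ENNReal.ofReal_ne_top),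
      ← ENNReal.ofReal_inv_of_pos (deltaG_pos hc), deltaG, inv_inv]
    gcongr
  · rw [le_div_iff₀ hc, div_lt_iff₀ hc, mul_right_comm, mul_right_comm (exp 8)]
    exact hsmall hr₁
  · rw [le_div_iff₀ hc, div_lt_iff₀ hc, mul_comm _ c.2.2, mul_comm _ c.2.2]
    exact hlarge hr₁

lemma exists_hasMaximalMajorant : ∃ C > 0, ∀ A, IsAtomG A → HasMaximalMajorant C A := by
  obtain ⟨C, hC, hcentered⟩ := exists_hasMaximalMajorant_of_isCenteredAtom
  refine ⟨C, hC, fun A hA ↦ ?_⟩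
  obtain ⟨c, hc, L, s, hA'⟩ := hA.exists_isCenteredAtom
  exact (hcentered _ L s hA').of_normalizedTranslate hc

/-! ### Summation over atoms -/

section Summation

variable {t : ℝ} {x : G} {f : G → ℝ}

lemma ofReal_abs_convPoisson_le_eLpNorm (hf : Integrable f ρG) (hx : 0 < x.2.2) (ht : 0 < t) :
    ENNReal.ofReal |convPoisson f t x| ≤
      ENNReal.ofReal (1 / x.2.2 ^ 2 * (1 / t ^ 3 + 1 / t ^ 2)) * eLpNorm f 1 ρG := by
  rw [convPoisson_eq_integral_convKernel hf.aestronglyMeasurable hx, ← Real.enorm_eq_ofReal_abs,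
    eLpNorm_one_eq_lintegral_enorm, ← lintegral_const_mul' _ _ ENNReal.ofReal_ne_top]
  refine (enorm_integral_le_lintegral_enorm _).trans (lintegral_mono_ae ?_)
  filter_upwards [ae_convKernel_norm_le hx ht] with z hz
  rw [enorm_mul, mul_comm, ← ofReal_norm (convKernel t x z)]
  gcongr

lemma convPoisson_eq_sub_sum_add_sum {lam : ℕ → ℝ} {A : ℕ → G → ℝ} (hf : Integrable f ρG)
    (hA : ∀ j, Integrable (A j) ρG) (hx : 0 < x.2.2) (ht : 0 < t) (N : ℕ) :
    convPoisson f t x =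
      convPoisson (fun y ↦ f y - ∑ j ∈ Finset.range N, lam j * A j y) t x +
        ∑ j ∈ Finset.range N, lam j * convPoisson (A j) t x := by
  have hlamA (j : ℕ) : Integrable (fun y ↦ lam j * A j y) ρG := (hA j).const_mul _
  have hsum : Integrable (fun y ↦ ∑ j ∈ Finset.range N, lam j * A j y) ρG :=
    integrable_finsetSum _ fun j _ ↦ hlamA j
  have hrest : Integrable (fun y ↦ f y - ∑ j ∈ Finset.range N, lam j * A j y) ρG := hf.sub hsum
  have hconv (j : ℕ) : lam j * convPoisson (A j) t x =
      ∫ z, lam j * A j z * convKernel t x z ∂ρG := by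
    simp_rw [convPoisson_eq_integral_convKernel (hA j).aestronglyMeasurable hx, mul_assoc]
    exact (integral_const_mul _ _).symm
  simp_rw [hconv]
  rw [convPoisson_eq_integral_convKernel hf.aestronglyMeasurable hx,
    convPoisson_eq_integral_convKernel hrest.aestronglyMeasurable hx,
    ← integral_finsetSum _ fun j _ ↦ integrable_mul_convKernel (hlamA j) hx ht,
    ← integral_add (integrable_mul_convKernel hrest hx ht)
      (integrable_finsetSum _ fun j _ ↦ integrable_mul_convKernel (hlamA j) hx ht)]
  simp only [← Finset.sum_mul, ← add_mul, sub_add_cancel]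

lemma IsH1Decomp.ofReal_abs_convPoisson_le {lam : ℕ → ℝ} {A : ℕ → G → ℝ} (h : IsH1Decomp f lam A)
    (hf : Integrable f ρG) (hx : 0 < x.2.2) (ht : 0 < t) :
    ENNReal.ofReal |convPoisson f t x| ≤
      ∑' j, ENNReal.ofReal |lam j| * ENNReal.ofReal |convPoisson (A j) t x| := by
  obtain ⟨hA, -, hlim⟩ := h
  set K := ENNReal.ofReal (1 / x.2.2 ^ 2 * (1 / t ^ 3 + 1 / t ^ 2))
  set S := ∑' j, ENNReal.ofReal |lam j| * ENNReal.ofReal |convPoisson (A j) t x|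
  have hbound (N : ℕ) : ENNReal.ofReal |convPoisson f t x| ≤
      K * eLpNorm (fun y ↦ f y - ∑ j ∈ Finset.range N, lam j * A j y) 1 ρG + S := by
    have hrest : Integrable (fun y ↦ f y - ∑ j ∈ Finset.range N, lam j * A j y) ρG :=
      hf.sub (integrable_finsetSum _ fun j _ ↦ (hA j).1.const_mul _)
    rw [convPoisson_eq_sub_sum_add_sum (lam := lam) hf (fun j ↦ (hA j).1) hx ht N]
    refine (ENNReal.ofReal_le_ofReal (abs_add_le _ _)).trans (ENNReal.ofReal_add_le.trans ?_)
    refine add_le_add (ofReal_abs_convPoisson_le_eLpNorm hrest hx ht) ?_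
    calc ENNReal.ofReal |∑ j ∈ Finset.range N, lam j * convPoisson (A j) t x|
        ≤ ENNReal.ofReal (∑ j ∈ Finset.range N, |lam j * convPoisson (A j) t x|) :=
          ENNReal.ofReal_le_ofReal (Finset.abs_sum_le_sum_abs _ _)
      _ = ∑ j ∈ Finset.range N,
            ENNReal.ofReal |lam j| * ENNReal.ofReal |convPoisson (A j) t x| := by
          simp_rw [ENNReal.ofReal_sum_of_nonneg fun j _ ↦ abs_nonneg (lam j * _), abs_mul,
            ENNReal.ofReal_mul (abs_nonneg (lam _))]
      _ ≤ S := ENNReal.sum_le_tsum _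
  have hlim' := (ENNReal.Tendsto.const_mul hlim (Or.inr (ENNReal.ofReal_ne_top : K ≠ ⊤))).add
    (tendsto_const_nhds (x := S))
  rw [mul_zero, zero_add] at hlim'
  exact ge_of_tendsto' hlim' hbound

lemma IsH1Decomp.maxPoisson_le {lam : ℕ → ℝ} {A F : ℕ → G → ℝ} (h : IsH1Decomp f lam A)
    (hf : Integrable f ρG) (hx : 0 < x.2.2) (hF : ∀ j, ∀ t > 0, |convPoisson (A j) t x| ≤ F j x) :
    maxPoisson f x ≤ ∑' j, ENNReal.ofReal |lam j| * ENNReal.ofReal (F j x) :=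
  iSup₂_le fun t ht ↦ (h.ofReal_abs_convPoisson_le hf hx ht).trans
    (ENNReal.tsum_le_tsum fun j ↦ by gcongr; exact hF j t ht)

lemma IsH1Decomp.lintegral_maxPoisson_le {lam : ℕ → ℝ} {A : ℕ → G → ℝ} {C : ℝ} (hC : 0 ≤ C)
    (h : IsH1Decomp f lam A) (hf : Integrable f ρG) (hmaj : ∀ j, HasMaximalMajorant C (A j)) :
    ∫⁻ x, maxPoisson f x ∂ρG ≤ ENNReal.ofReal (C * ∑' j, |lam j|) := by
  choose F hF hle hint using hmaj
  have hF_nonneg (j : ℕ) : 0 ≤ᵐ[ρG] F j := by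
    filter_upwards [ae_pos_ρG] with x hx
    exact (abs_nonneg _).trans (hle j x hx 1 one_pos)
  calc ∫⁻ x, maxPoisson f x ∂ρG
      ≤ ∫⁻ x, ∑' j, ENNReal.ofReal |lam j| * ENNReal.ofReal (F j x) ∂ρG := by
        refine lintegral_mono_ae ?_
        filter_upwards [ae_pos_ρG] with x hx
        exact h.maxPoisson_le hf hx fun j ↦ hle j x hx
    _ = ∑' j, ENNReal.ofReal |lam j| * ENNReal.ofReal (∫ x, F j x ∂ρG) := by
        rw [lintegral_tsum fun j ↦ (hF j).aemeasurable.ennreal_ofReal.const_mul _]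
        simp_rw [lintegral_const_mul' _ _ ENNReal.ofReal_ne_top,
          fun j ↦ ofReal_integral_eq_lintegral_ofReal (hF j) (hF_nonneg j)]
    _ ≤ ∑' j, ENNReal.ofReal |lam j| * ENNReal.ofReal C := by
        gcongr with j
        exact hint j
    _ = ENNReal.ofReal (C * ∑' j, |lam j|) := by
        rw [ENNReal.tsum_mul_right, ← ENNReal.ofReal_tsum_of_nonneg (fun j ↦ abs_nonneg _) h.2.1,
          mul_comm, ENNReal.ofReal_mul hC]

lemma MemH1.le_ofReal_mul_H1norm {C : ℝ} {I : ℝ≥0∞} (hC : 0 < C) (hf : MemH1 f)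
    (hI : ∀ lam A, IsH1Decomp f lam A → I ≤ ENNReal.ofReal (C * ∑' j, |lam j|)) :
    I ≤ ENNReal.ofReal (C * H1norm f) := by
  obtain ⟨-, lam₀, A₀, h₀⟩ := hf
  have hI_ne_top : I ≠ ⊤ := ne_top_of_le_ne_top ENNReal.ofReal_ne_top (hI lam₀ A₀ h₀)
  have hnorm : I.toReal / C ≤ H1norm f := by
    refine le_csInf ⟨_, lam₀, A₀, h₀, rfl⟩ ?_
    rintro _ ⟨lam, A, h, rfl⟩
    rw [div_le_iff₀' hC]
    exact ENNReal.toReal_le_of_le_ofReal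
      (mul_nonneg hC.le (tsum_nonneg fun _ ↦ abs_nonneg _)) (hI lam A h)
  rw [← ENNReal.ofReal_toReal hI_ne_top]
  exact ENNReal.ofReal_le_ofReal ((div_le_iff₀' hC).1 hnorm)

end Summation

theorem poisson_maximal_H1_to_L1 :
    ∃ C > (0 : ℝ), ∀ f : G → ℝ, MemH1 f →
      ∫⁻ x, maxPoisson f x ∂ρG ≤ ENNReal.ofReal (C * H1norm f) := by
  obtain ⟨C, hC, hatom⟩ := exists_hasMaximalMajorant
  exact ⟨C, hC, fun f hf ↦ hf.le_ofReal_mul_H1norm hC fun _ _ h ↦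
    h.lintegral_maxPoisson_le hC.le hf.1 fun j ↦ hatom _ (h.1 j)⟩
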